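/- (Concentration–compactness, convergence part.) Let N ≥ 3, α ∈ (0, N), p ≥ (N+α)/(N−2), and let {u_n} be uniformly bounded in D^{1,2}(G). Then there exist a subsequence (still denoted {u_n}) and u ∈ D^{1,2}(G) such that: (i) u_n → u pointwise on G; (ii) for every h : G → ℝ vanishing at infinity (h ∈ c₀(G)), ∑_{x∈G} h(x)|∇u_n(x)|₂² → ∑_{x∈G} h(x)|∇u(x)|₂²; (iii) for every h ∈ c₀(G), ∑_{x∈G} h(x)|∇(u_n−u)(x)|₂² → 0; and (iv) for every h ∈ c₀(G), ∑_{x∈G} h(x)·(R_α ∗ |u_n−u|^p)(x)|u_n(x)−u(x)|^p → 0. -/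

import Mathlib

open Filter Topology

noncomputable section

namespace Choquard

variable {G : Type*}

/-- The word metric on the Cayley graph of `(G, S)`: the least `k` such that
`y = x * s₁ * ⋯ * s_k` with each `sᵢ ∈ S`. -/
def wordDist [Group G] (S : Finset G) (x y : G) : ℕ :=
  sInf {k : ℕ | ∃ l : List G, (∀ s ∈ l, s ∈ S) ∧ l.length = k ∧ y = x * l.prod}

/-- Convolution against a kernel: `(R ∗ f)(x) = ∑_{y ∈ G} R(x,y) f(y)`. -/
def conv (R : G → G → ℝ) (f : G → ℝ) (x : G) : ℝ := ∑' y, R x y * f y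

/-- The `ℓ^q(G)` norm of `u`. -/
def lpNorm (q : ℝ) (u : G → ℝ) : ℝ := (∑' x, |u x| ^ q) ^ (1 / q)

/-- `u ∈ ℓ^q(G)`. -/
def Memlp (q : ℝ) (u : G → ℝ) : Prop := Summable fun x : G => |u x| ^ q

/-- `|∇u(x)|_p^p = ∑_{y ∼ x} |u(y) − u(x)|^p`, where `y ∼ x` iff `y = x * s`, `s ∈ S`. -/
def gradP [Group G] (S : Finset G) (p : ℝ) (u : G → ℝ) (x : G) : ℝ :=
  ∑ s ∈ S, |u (x * s) - u x| ^ p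

/-- The `D^{1,p}` norm `(∑_x ∑_{y ∼ x} |u(y) − u(x)|^p)^{1/p}`. -/
def D1Norm [Group G] (S : Finset G) (p : ℝ) (u : G → ℝ) : ℝ :=
  (∑' x, gradP S p u x) ^ (1 / p)

/-- `u ∈ D^{1,p}(G) = {u ∈ ℓ^{Np/(N−p)}(G) : ‖u‖_{D^{1,p}} < ∞}`. -/
def MemD1p [Group G] (S : Finset G) (N : ℕ) (p : ℝ) (u : G → ℝ) : Prop :=
  Memlp ((N : ℝ) * p / ((N : ℝ) - p)) u ∧ Summable (gradP S p u)

/-- `|∇u(x)|₂² = ∑_{y ∼ x} (u(y) − u(x))²`. -/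
def gradSq [Group G] (S : Finset G) (u : G → ℝ) (x : G) : ℝ :=
  ∑ s ∈ S, (u (x * s) - u x) ^ 2

/-- The `D^{1,2}` norm. -/
def D12Norm [Group G] (S : Finset G) (u : G → ℝ) : ℝ :=
  (∑' x, gradSq S u x) ^ ((1 : ℝ) / 2)

/-- `u ∈ D^{1,2}(G) = {u ∈ ℓ^{2N/(N−2)}(G) : ‖u‖_{D^{1,2}} < ∞}`. -/
def MemD12 [Group G] (S : Finset G) (N : ℕ) (u : G → ℝ) : Prop :=
  Memlp (2 * (N : ℝ) / ((N : ℝ) - 2)) u ∧ Summable (gradSq S u)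

/-- The graph Laplacian `Δu(x) = ∑_{y ∼ x} (u(y) − u(x))`. -/
def lap [Group G] (S : Finset G) (u : G → ℝ) (x : G) : ℝ :=
  ∑ s ∈ S, (u (x * s) - u x)

/-- `u ∈ D^{2,2}(G) = {u ∈ ℓ^{2N/(N−4)}(G) : ‖Δu‖_{ℓ²} < ∞}`. -/
def MemD22 [Group G] (S : Finset G) (N : ℕ) (u : G → ℝ) : Prop :=
  Memlp (2 * (N : ℝ) / ((N : ℝ) - 4)) u ∧ Summable fun x => (lap S u x) ^ 2

/-- `u ∈ D^{2,p}(G) = {u ∈ ℓ^{Np/(N−2p)}(G) : ‖Δu‖_{ℓ^p} < ∞}`. -/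
def MemD2p [Group G] (S : Finset G) (N : ℕ) (p : ℝ) (u : G → ℝ) : Prop :=
  Memlp ((N : ℝ) * p / ((N : ℝ) - 2 * p)) u ∧ Summable fun x => |lap S u x| ^ p

/-- The nonlocal energy `∑_{x ∈ G} (R_α ∗ |u|^p)(x) |u(x)|^p`. -/
def energy (R : G → G → ℝ) (p : ℝ) (u : G → ℝ) : ℝ :=
  ∑' x, conv R (fun y => |u y| ^ p) x * |u x| ^ p

/-- The optimal constant `K` of the Sobolev-type inequality. -/
def bestK [Group G] (S : Finset G) (N : ℕ) (R : G → G → ℝ) (p : ℝ) : ℝ :=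
  sSup {t : ℝ | ∃ u : G → ℝ, MemD12 S N u ∧ D12Norm S u = 1 ∧ t = energy R p u}

/-- The discrete `p`-Laplacian. -/
def pLap [Group G] (S : Finset G) (p : ℝ) (u : G → ℝ) (x : G) : ℝ :=
  ∑ s ∈ S, |u (x * s) - u x| ^ (p - 2) * (u (x * s) - u x)

/-- The cutoff `Ψ_r`, the indicator of `{x : d(x,e) ≥ r + 1}`. -/
def cutoff [Group G] (S : Finset G) (r : ℕ) (x : G) : ℝ :=
  if r + 1 ≤ wordDist S 1 x then 1 else 0

/-!
Polynomial growth from below gives, for every finite set `A`, a ball of radius `≲ |A| ^ (1 / N)`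
with at least `2 |A|` elements; comparing a function supported in `A` with its translates by this
ball yields a Faber–Krahn inequality. Applied to the dyadic layers of `|u|` it becomes the Sobolev
inequality `‖u‖_{2N/(N-2)} ≲ ‖u‖_{D^{1,2}}`, so a bounded sequence in `D^{1,2}` is pointwise bounded
and has a pointwise convergent subsequence. Growth from above gives the Hardy–Littlewood–Sobolev
inequality, hence a bound for the nonlocal energies of the differences `u_n - u`. The rest is soft:
on a discrete space, nonnegative densities with bounded total mass that converge pointwise also
converge against every function vanishing at infinity. Escape of mass to infinity is invisible to
such test functions, and concentration at a point would contradict pointwise convergence.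
-/

section PointwiseLimits

variable {X ι : Type*} {l : Filter ι}

lemma summable_and_tsum_le_of_tendsto [l.NeBot] {g : ι → X → ℝ} {g₀ : X → ℝ} {B : ℝ}
    (hg : ∀ i x, 0 ≤ g i x) (hs : ∀ i, Summable (g i)) (hB : ∀ i, ∑' x, g i x ≤ B)
    (hlim : ∀ x, Tendsto (fun i => g i x) l (𝓝 (g₀ x))) :
    Summable g₀ ∧ ∑' x, g₀ x ≤ B := by
  have hg₀ : ∀ x, 0 ≤ g₀ x := fun x => ge_of_tendsto' (hlim x) (hg · x)
  have hsum : ∀ F : Finset X, ∑ x ∈ F, g₀ x ≤ B := fun F =>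
    le_of_tendsto' (tendsto_finsetSum F fun x _ => hlim x) fun i =>
      ((hs i).sum_le_tsum F fun x _ => hg i x).trans (hB i)
  exact ⟨summable_of_sum_le hg₀ hsum, Real.tsum_le_of_sum_le hg₀ hsum⟩

lemma abs_tsum_mul_sub_sum_mul_le {k h : X → ℝ} (hk : ∀ x, 0 ≤ k x) (hs : Summable k)
    {ε : ℝ} (hε : 0 ≤ ε) {F : Finset X} (hF : ∀ x ∉ F, |h x| ≤ ε) :
    |∑' x, h x * k x - ∑ x ∈ F, h x * k x| ≤ ε * ∑' x, k x := by
  have hle : ∀ x ∉ F, ‖h x * k x‖ ≤ ε * k x := fun x hx => by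
    rw [Real.norm_eq_abs, abs_mul, abs_of_nonneg (hk x)]
    exact mul_le_mul_of_nonneg_right (hF x hx) (hk x)
  have hhk : Summable fun x => h x * k x :=
    .of_norm_bounded_eventually (hs.mul_left ε) <|
      mem_of_superset F.finite_toSet.compl_mem_cofinite hle
  have hsub : Summable fun x : {x // x ∉ F} => k x := hs.subtype _
  rw [← hhk.sum_add_tsum_subtype_compl F, add_sub_cancel_left, ← Real.norm_eq_abs]
  calc ‖∑' x : {x // x ∉ F}, h x * k x‖
      ≤ ε * ∑' x : {x // x ∉ F}, k x :=
        tsum_of_norm_bounded (hsub.hasSum.mul_left ε) fun x => hle x x.2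
    _ ≤ ε * ∑' x, k x := mul_le_mul_of_nonneg_left (hs.tsum_subtype_le _ _ hk) hε

/-- The finite partial sums of `∑ h * g i` converge uniformly in `i`, so limits interchange. -/
theorem tendsto_tsum_mul_of_tendsto_cofinite_zero [l.NeBot] {g : ι → X → ℝ} {g₀ : X → ℝ} {B : ℝ}
    (hg : ∀ i x, 0 ≤ g i x) (hs : ∀ i, Summable (g i)) (hB : ∀ i, ∑' x, g i x ≤ B)
    (hlim : ∀ x, Tendsto (fun i => g i x) l (𝓝 (g₀ x)))
    {h : X → ℝ} (hh : Tendsto h cofinite (𝓝 0)) :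
    Tendsto (fun i => ∑' x, h x * g i x) l (𝓝 (∑' x, h x * g₀ x)) := by
  obtain ⟨hs₀, hB₀⟩ := summable_and_tsum_le_of_tendsto hg hs hB hlim
  have hg₀ : ∀ x, 0 ≤ g₀ x := fun x => ge_of_tendsto' (hlim x) (hg · x)
  have hB_nonneg : 0 ≤ B := (tsum_nonneg hg₀).trans hB₀
  have htail : ∀ ε > 0, ∀ᶠ F : Finset X in atTop, ∀ k : X → ℝ, (∀ x, 0 ≤ k x) → Summable k →
      ∑' x, k x ≤ B → dist (∑' x, h x * k x) (∑ x ∈ F, h x * k x) < ε := by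
    intro ε hε
    have hη : 0 < ε / (B + 1) := by positivity
    have hfin : {x | ¬ |h x| ≤ ε / (B + 1)}.Finite := by
      simpa using hh.abs.eventually (eventually_le_nhds (by simpa using hη))
    filter_upwards [eventually_ge_atTop hfin.toFinset] with F hF k hk hks hkB
    have hout : ∀ x ∉ F, |h x| ≤ ε / (B + 1) := fun x hx => by
      by_contra hlt
      exact hx (hF (hfin.mem_toFinset.2 hlt))
    calc |∑' x, h x * k x - ∑ x ∈ F, h x * k x|
        ≤ ε / (B + 1) * ∑' x, k x := abs_tsum_mul_sub_sum_mul_le hk hks hη.le hout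
      _ ≤ ε / (B + 1) * B := by gcongr
      _ < ε / (B + 1) * (B + 1) := by gcongr; linarith
      _ = ε := by field_simp
  have hunif : TendstoUniformly (fun (F : Finset X) i => ∑ x ∈ F, h x * g i x)
      (fun i => ∑' x, h x * g i x) atTop := by
    rw [Metric.tendstoUniformly_iff]
    exact fun ε hε => (htail ε hε).mono fun F hF i => hF (g i) (hg i) (hs i) (hB i)
  have hlim₀ : Tendsto (fun F : Finset X => ∑ x ∈ F, h x * g₀ x) atTop
      (𝓝 (∑' x, h x * g₀ x)) := by
    rw [Metric.tendsto_nhds]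
    exact fun ε hε => (htail ε hε).mono fun F hF => by
      rw [dist_comm]
      exact hF g₀ hg₀ hs₀ hB₀
  exact hunif.tendsto_of_eventually_tendsto
    (.of_forall fun F => tendsto_finsetSum F fun x _ => (hlim x).const_mul (h x)) hlim₀

lemma exists_strictMono_tendsto_of_abs_le [Countable X] {u : ℕ → X → ℝ} {b : X → ℝ}
    (hu : ∀ n x, |u n x| ≤ b x) :
    ∃ φ : ℕ → ℕ, StrictMono φ ∧ ∃ v : X → ℝ,
      ∀ x, Tendsto (fun n => u (φ n) x) atTop (𝓝 (v x)) := by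
  have hcompact : IsCompact (Set.univ.pi fun x => Set.Icc (-b x) (b x)) :=
    isCompact_univ_pi fun _ => isCompact_Icc
  obtain ⟨v, -, φ, hφ, hv⟩ := hcompact.tendsto_subseq fun n x _ => abs_le.1 (hu n x)
  exact ⟨φ, hφ, v, tendsto_pi_nhds.1 hv⟩

end PointwiseLimits

section LpNorms

variable {X : Type*} {q r : ℝ} {u v : X → ℝ}

lemma lpNorm_nonneg (q : ℝ) (u : X → ℝ) : 0 ≤ lpNorm q u := by
  unfold lpNorm
  positivity

lemma lpNorm_rpow (hq : q ≠ 0) (u : X → ℝ) : lpNorm q u ^ q = ∑' x, |u x| ^ q := by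
  rw [lpNorm, one_div, Real.rpow_inv_rpow (tsum_nonneg fun x => by positivity) hq]

lemma Memlp.sum_rpow_le (hu : Memlp q u) (hq : q ≠ 0) (F : Finset X) :
    ∑ x ∈ F, |u x| ^ q ≤ lpNorm q u ^ q := by
  rw [lpNorm_rpow hq]
  exact Summable.sum_le_tsum F (fun x _ => by positivity) hu

lemma Memlp.abs_le_lpNorm (hu : Memlp q u) (hq : 0 < q) (x : X) : |u x| ≤ lpNorm q u := by
  rw [← Real.rpow_le_rpow_iff (abs_nonneg _) (lpNorm_nonneg q u) hq]
  simpa using hu.sum_rpow_le hq.ne' {x}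

lemma Memlp.rpow_mul_card_le (hu : Memlp q u) (hq : 0 ≤ q) {t : ℝ} (ht : 0 ≤ t) {A : Finset X}
    (hA : ∀ x ∈ A, t ≤ |u x|) : t ^ q * A.card ≤ ∑' x, |u x| ^ q := by
  rw [mul_comm, ← nsmul_eq_mul]
  exact (Finset.card_nsmul_le_sum A _ _ fun x hx => Real.rpow_le_rpow ht (hA x hx) hq).trans
    (Summable.sum_le_tsum A (fun x _ => by positivity) hu)

lemma Memlp.finite_setOf_lt_abs (hu : Memlp q u) (hq : 0 < q) {t : ℝ} (ht : 0 < t) :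
    {x | t < |u x|}.Finite := by
  have hev := hu.tendsto_cofinite_zero.eventually_lt_const (Real.rpow_pos_of_pos ht q)
  refine (eventually_cofinite.1 hev).subset fun x hx => not_lt.2 ?_
  exact Real.rpow_le_rpow ht.le (le_of_lt hx) hq.le

lemma Memlp.sub (hq : 0 < q) (hu : Memlp q u) (hv : Memlp q v) :
    Memlp q fun x => u x - v x := by
  have hiff : ∀ w : X → ℝ, Memlp q w ↔ Memℓp w (ENNReal.ofReal q) := fun w => by
    rw [memℓp_gen_iff (by rwa [ENNReal.toReal_ofReal hq.le]), ENNReal.toReal_ofReal hq.le]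
    rfl
  exact (hiff _).2 (((hiff u).1 hu).sub ((hiff v).1 hv))

lemma Memlp.mono_exponent (hr : 0 < r) (hrq : r ≤ q) (hu : Memlp r u) :
    Memlp q u ∧ lpNorm q u ≤ lpNorm r u := by
  have hq : 0 < q := hr.trans_le hrq
  have hle : ∀ x, |u x| ^ q ≤ lpNorm r u ^ (q - r) * |u x| ^ r := fun x => by
    rw [← sub_add_cancel q r, Real.rpow_add_of_nonneg (abs_nonneg _) (sub_nonneg.2 hrq) hr.le,
      add_sub_cancel_right]
    gcongr
    exact hu.abs_le_lpNorm hr x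
  have hsum : Summable fun x => lpNorm r u ^ (q - r) * |u x| ^ r := Summable.mul_left _ hu
  have hmem : Memlp q u := .of_nonneg_of_le (fun x => by positivity) hle hsum
  refine ⟨hmem, ?_⟩
  rw [← Real.rpow_le_rpow_iff (lpNorm_nonneg q u) (lpNorm_nonneg r u) hq]
  calc lpNorm q u ^ q = ∑' x, |u x| ^ q := lpNorm_rpow hq.ne' u
    _ ≤ ∑' x, lpNorm r u ^ (q - r) * |u x| ^ r := Summable.tsum_le_tsum hle hmem hsum
    _ = lpNorm r u ^ (q - r) * lpNorm r u ^ r := by rw [tsum_mul_left, lpNorm_rpow hr.ne']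
    _ = lpNorm r u ^ q := by
      rw [← Real.rpow_add_of_nonneg (lpNorm_nonneg r u) (sub_nonneg.2 hrq) hr.le, sub_add_cancel]

lemma memlp_abs_rpow_iff (p : ℝ) : Memlp q (fun x => |u x| ^ p) ↔ Memlp (p * q) u := by
  simp only [Memlp, Real.abs_rpow_of_nonneg (abs_nonneg _), abs_abs,
    ← Real.rpow_mul (abs_nonneg _)]

lemma lpNorm_abs_rpow {p : ℝ} (hp : p ≠ 0) (u : X → ℝ) :
    lpNorm q (fun x => |u x| ^ p) = lpNorm (p * q) u ^ p := by
  have hnonneg : 0 ≤ ∑' x, |u x| ^ (p * q) := tsum_nonneg fun x => by positivity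
  simp only [lpNorm, Real.abs_rpow_of_nonneg (abs_nonneg _), abs_abs,
    ← Real.rpow_mul (abs_nonneg _), ← Real.rpow_mul hnonneg]
  congr 1
  field_simp

end LpNorms

section WordMetric

variable [Group G] {S : Finset G}

lemma exists_list_prod_eq (hS_gen : Subgroup.closure (S : Set G) = ⊤)
    (hS_sym : ∀ s ∈ S, s⁻¹ ∈ S) (g : G) : ∃ l : List G, (∀ s ∈ l, s ∈ S) ∧ l.prod = g := by
  have hinv : (S : Set G)⁻¹ ⊆ S := fun s hs => by simpa using hS_sym s⁻¹ hs
  have hg : g ∈ Submonoid.closure (S : Set G) := by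
    rw [← Set.union_eq_left.2 hinv, ← Subgroup.closure_toSubmonoid, hS_gen]
    exact Subgroup.mem_top g
  exact Submonoid.exists_list_of_mem_closure hg

lemma exists_list_length_eq_wordDist (hS_gen : Subgroup.closure (S : Set G) = ⊤)
    (hS_sym : ∀ s ∈ S, s⁻¹ ∈ S) (g : G) :
    ∃ l : List G, (∀ s ∈ l, s ∈ S) ∧ l.length = wordDist S 1 g ∧ l.prod = g := by
  obtain ⟨l₀, hl₀, rfl⟩ := exists_list_prod_eq hS_gen hS_sym g
  obtain ⟨l, hl, hlen, hprod⟩ := Nat.sInf_mem (s := {k | ∃ l : List G, (∀ s ∈ l, s ∈ S) ∧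
    l.length = k ∧ l₀.prod = 1 * l.prod}) ⟨_, l₀, hl₀, rfl, (one_mul _).symm⟩
  exact ⟨l, hl, hlen, by rw [hprod, one_mul]⟩

lemma countable_of_closure_eq_top (hS_gen : Subgroup.closure (S : Set G) = ⊤)
    (hS_sym : ∀ s ∈ S, s⁻¹ ∈ S) : Countable G := by
  have hsurj : Function.Surjective fun l : List S => (l.map Subtype.val).prod := fun g => by
    obtain ⟨l, hl, rfl⟩ := exists_list_prod_eq hS_gen hS_sym g
    exact ⟨l.attachWith _ hl, by simp⟩
  exact hsurj.countable

lemma wordDist_eq_wordDist_one (S : Finset G) (x y : G) :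
    wordDist S x y = wordDist S 1 (x⁻¹ * y) := by
  simp only [wordDist, one_mul, inv_mul_eq_iff_eq_mul]

lemma wordDist_comm (hS_sym : ∀ s ∈ S, s⁻¹ ∈ S) (x y : G) :
    wordDist S x y = wordDist S y x := by
  have hreverse : ∀ {x y : G} {k : ℕ},
      (∃ l : List G, (∀ s ∈ l, s ∈ S) ∧ l.length = k ∧ y = x * l.prod) →
      ∃ l : List G, (∀ s ∈ l, s ∈ S) ∧ l.length = k ∧ x = y * l.prod := by
    rintro x y k ⟨l, hl, hlen, rfl⟩
    refine ⟨(l.map (·⁻¹)).reverse, fun s hs => ?_, by simpa using hlen, ?_⟩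
    · simpa using hS_sym _ (hl s⁻¹ (by simpa using hs))
    · rw [← List.prod_inv_reverse, mul_inv_cancel_right]
  exact congrArg sInf (Set.ext fun k => ⟨hreverse, hreverse⟩)

lemma finite_setOf_wordDist_le (hS_gen : Subgroup.closure (S : Set G) = ⊤)
    (hS_sym : ∀ s ∈ S, s⁻¹ ∈ S) (n : ℕ) : {g : G | wordDist S 1 g ≤ n}.Finite := by
  refine ((List.finite_length_le S n).image fun l => (l.map Subtype.val).prod).subset fun g hg => ?_
  obtain ⟨l, hl, hlen, rfl⟩ := exists_list_length_eq_wordDist hS_gen hS_sym g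
  exact ⟨l.attachWith _ hl, by simpa [hlen] using hg, by simp⟩

end WordMetric

section GradientEnergy

variable [Group G] {S : Finset G} {u v : G → ℝ}

lemma gradSq_nonneg (S : Finset G) (u : G → ℝ) (x : G) : 0 ≤ gradSq S u x :=
  Finset.sum_nonneg fun _ _ => sq_nonneg _

lemma D12Norm_nonneg (S : Finset G) (u : G → ℝ) : 0 ≤ D12Norm S u :=
  Real.rpow_nonneg (tsum_nonneg (gradSq_nonneg S u)) _

lemma D12Norm_sq (S : Finset G) (u : G → ℝ) : D12Norm S u ^ 2 = ∑' x, gradSq S u x := by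
  rw [D12Norm, ← Real.sqrt_eq_rpow, Real.sq_sqrt (tsum_nonneg (gradSq_nonneg S u))]

lemma gradSq_sub_le (S : Finset G) (u v : G → ℝ) (x : G) :
    gradSq S (fun z => u z - v z) x ≤ 2 * (gradSq S u x + gradSq S v x) := by
  simp only [gradSq, ← Finset.sum_add_distrib, Finset.mul_sum]
  refine Finset.sum_le_sum fun s _ => ?_
  linarith [sq_nonneg (u (x * s) - u x + (v (x * s) - v x))]

lemma summable_gradSq_sub (hu : Summable (gradSq S u)) (hv : Summable (gradSq S v)) :
    Summable (gradSq S fun z => u z - v z) :=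
  .of_nonneg_of_le (gradSq_nonneg S _) (gradSq_sub_le S u v) ((hu.add hv).mul_left 2)

lemma tsum_gradSq_sub_le (hu : Summable (gradSq S u)) (hv : Summable (gradSq S v)) :
    ∑' x, gradSq S (fun z => u z - v z) x ≤ 2 * (∑' x, gradSq S u x + ∑' x, gradSq S v x) := by
  rw [← hu.tsum_add hv, ← tsum_mul_left]
  exact (summable_gradSq_sub hu hv).tsum_le_tsum (gradSq_sub_le S u v) ((hu.add hv).mul_left 2)

lemma tendsto_gradSq {ι : Type*} {l : Filter ι} {w : ι → G → ℝ}
    (hw : ∀ x, Tendsto (fun i => w i x) l (𝓝 (u x))) (x : G) :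
    Tendsto (fun i => gradSq S (w i) x) l (𝓝 (gradSq S u x)) :=
  tendsto_finsetSum S fun s _ => ((hw (x * s)).sub (hw x)).pow 2

lemma sq_sub_mul_prod_le {l : List G} (hl : ∀ s ∈ l, s ∈ S) (w : G → ℝ) (x : G) :
    (w (x * l.prod) - w x) ^ 2 ≤
      l.length * ∑ i ∈ Finset.range l.length, gradSq S w (x * (l.take i).prod) := by
  have htelescope : w (x * l.prod) - w x = ∑ i ∈ Finset.range l.length,
      (w (x * (l.take (i + 1)).prod) - w (x * (l.take i).prod)) := by
    rw [Finset.sum_range_sub fun i => w (x * (l.take i).prod)]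
    simp
  have hstep : ∀ i ∈ Finset.range l.length,
      (w (x * (l.take (i + 1)).prod) - w (x * (l.take i).prod)) ^ 2 ≤
        gradSq S w (x * (l.take i).prod) := fun i hi => by
    rw [List.prod_take_succ l i (Finset.mem_range.1 hi), ← mul_assoc]
    exact Finset.single_le_sum
      (f := fun s => (w (x * (l.take i).prod * s) - w (x * (l.take i).prod)) ^ 2)
      (fun _ _ => sq_nonneg _) (hl _ (List.getElem_mem _))
  calc (w (x * l.prod) - w x) ^ 2
      ≤ l.length * ∑ i ∈ Finset.range l.length,
          (w (x * (l.take (i + 1)).prod) - w (x * (l.take i).prod)) ^ 2 := by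
        simpa [htelescope] using sq_sum_le_card_mul_sum_sq (s := Finset.range l.length)
          (f := fun i => w (x * (l.take (i + 1)).prod) - w (x * (l.take i).prod))
    _ ≤ _ := by gcongr with i hi; exact hstep i hi

/-- The pseudo-Poincaré inequality. -/
theorem sum_sq_sub_mul_prod_le {l : List G} (hl : ∀ s ∈ l, s ∈ S) {w : G → ℝ}
    (hw : Summable (gradSq S w)) (F : Finset G) :
    ∑ x ∈ F, (w (x * l.prod) - w x) ^ 2 ≤ (l.length : ℝ) ^ 2 * ∑' x, gradSq S w x := by
  have htranslate : ∀ g : G, ∑ x ∈ F, gradSq S w (x * g) ≤ ∑' x, gradSq S w x := fun g => by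
    rw [← (Equiv.mulRight g).tsum_eq (gradSq S w)]
    exact ((Equiv.mulRight g).summable_iff.2 hw).sum_le_tsum F fun x _ => gradSq_nonneg S w _
  calc ∑ x ∈ F, (w (x * l.prod) - w x) ^ 2
      ≤ ∑ x ∈ F, l.length * ∑ i ∈ Finset.range l.length, gradSq S w (x * (l.take i).prod) :=
        Finset.sum_le_sum fun x _ => sq_sub_mul_prod_le hl w x
    _ = l.length * ∑ i ∈ Finset.range l.length, ∑ x ∈ F, gradSq S w (x * (l.take i).prod) := by
        rw [← Finset.mul_sum, Finset.sum_comm]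
    _ ≤ l.length * ∑ i ∈ Finset.range l.length, ∑' x, gradSq S w x := by
        gcongr
        exact htranslate _
    _ = (l.length : ℝ) ^ 2 * ∑' x, gradSq S w x := by
        rw [Finset.sum_const, Finset.card_range, nsmul_eq_mul, sq, mul_assoc]

end GradientEnergy

section FaberKrahn

variable [Group G] {S : Finset G}

lemma card_le_two_mul_card_filter_mul_notMem [DecidableEq G] {A B : Finset G}
    (hAB : 2 * A.card ≤ B.card) (x : G) :
    B.card ≤ 2 * (B.filter fun g => x * g ∉ A).card := by
  have hmem : (B.filter fun g => x * g ∈ A).card ≤ A.card :=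
    Finset.card_le_card_of_injOn (x * ·) (by simp [Set.MapsTo]) (mul_right_injective x).injOn
  have hsplit := Finset.card_filter_add_card_filter_not (s := B) fun g => x * g ∈ A
  omega

lemma sum_sq_le_of_two_mul_card_le (hS_gen : Subgroup.closure (S : Set G) = ⊤)
    (hS_sym : ∀ s ∈ S, s⁻¹ ∈ S) {w : G → ℝ} (hw : Summable (gradSq S w)) {A B : Finset G}
    (hwA : ∀ x ∉ A, w x = 0) {n : ℕ} (hB : ∀ g ∈ B, wordDist S 1 g ≤ n)
    (hB_nonempty : B.Nonempty) (hAB : 2 * A.card ≤ B.card) :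
    ∑ x ∈ A, w x ^ 2 ≤ 2 * (n : ℝ) ^ 2 * ∑' x, gradSq S w x := by
  classical
  have hupper : ∀ g ∈ B,
      ∑ x ∈ A, (w (x * g) - w x) ^ 2 ≤ (n : ℝ) ^ 2 * ∑' x, gradSq S w x := fun g hg => by
    obtain ⟨l, hl, hlen, rfl⟩ := exists_list_length_eq_wordDist hS_gen hS_sym g
    have hln : l.length ≤ n := hlen.trans_le (hB _ hg)
    refine (sum_sq_sub_mul_prod_le hl hw A).trans ?_
    gcongr
    exact tsum_nonneg (gradSq_nonneg S w)
  have hlower : ∀ x, B.card * w x ^ 2 ≤ 2 * ∑ g ∈ B, (w (x * g) - w x) ^ 2 := fun x => by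
    have hcard : (B.card : ℝ) ≤ 2 * (B.filter fun g => x * g ∉ A).card := mod_cast
      card_le_two_mul_card_filter_mul_notMem hAB x
    calc B.card * w x ^ 2
        ≤ 2 * ((B.filter fun g => x * g ∉ A).card * w x ^ 2) := by
          rw [← mul_assoc]
          gcongr
      _ = 2 * ∑ g ∈ B.filter fun g => x * g ∉ A, (w (x * g) - w x) ^ 2 := by
          rw [← nsmul_eq_mul, ← Finset.sum_const]
          congr 1
          refine Finset.sum_congr rfl fun g hg => ?_
          rw [hwA _ (Finset.mem_filter.1 hg).2, zero_sub, neg_sq]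
      _ ≤ 2 * ∑ g ∈ B, (w (x * g) - w x) ^ 2 := by
          gcongr
          exact Finset.filter_subset _ _
  have hB_pos : (0 : ℝ) < B.card := mod_cast hB_nonempty.card_pos
  refine le_of_mul_le_mul_left ?_ hB_pos
  calc B.card * ∑ x ∈ A, w x ^ 2
      ≤ ∑ x ∈ A, 2 * ∑ g ∈ B, (w (x * g) - w x) ^ 2 := by
        rw [Finset.mul_sum]
        exact Finset.sum_le_sum fun x _ => hlower x
    _ = 2 * ∑ g ∈ B, ∑ x ∈ A, (w (x * g) - w x) ^ 2 := by rw [← Finset.mul_sum, Finset.sum_comm]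
    _ ≤ 2 * ∑ _g ∈ B, (n : ℝ) ^ 2 * ∑' x, gradSq S w x := by
        gcongr with g hg
        exact hupper g hg
    _ = B.card * (2 * (n : ℝ) ^ 2 * ∑' x, gradSq S w x) := by
        rw [Finset.sum_const, nsmul_eq_mul]
        ring

lemma exists_nat_two_mul_le_mul_pow {N : ℕ} (hN : N ≠ 0) {C : ℝ} (hC : 0 < C) {m : ℝ}
    (hm : 1 ≤ m) :
    ∃ n : ℕ, 1 ≤ n ∧ 2 * m ≤ C * (n : ℝ) ^ N ∧
      (n : ℝ) ^ 2 ≤ ((2 / C) ^ (1 / (N : ℝ)) + 1) ^ 2 * m ^ (2 / (N : ℝ)) := by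
  have hm_pos : 0 < m := one_pos.trans_le hm
  set y : ℝ := (2 / C * m) ^ (1 / (N : ℝ)) with hy
  have hy_pos : 0 < y := by positivity
  have hyN : y ^ N = 2 / C * m := by
    rw [hy, one_div, Real.rpow_inv_natCast_pow (by positivity) hN]
  refine ⟨⌈y⌉₊, Nat.one_le_ceil_iff.2 hy_pos, ?_, ?_⟩
  · calc 2 * m = C * y ^ N := by rw [hyN]; field_simp
      _ ≤ C * (⌈y⌉₊ : ℝ) ^ N := by gcongr; exact Nat.le_ceil y
  · have hceil : (⌈y⌉₊ : ℝ) ≤ ((2 / C) ^ (1 / (N : ℝ)) + 1) * m ^ (1 / (N : ℝ)) :=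
      calc (⌈y⌉₊ : ℝ) ≤ y + 1 := (Nat.ceil_lt_add_one hy_pos.le).le
        _ ≤ (2 / C) ^ (1 / (N : ℝ)) * m ^ (1 / (N : ℝ)) + m ^ (1 / (N : ℝ)) := by
          rw [hy, Real.mul_rpow (by positivity) hm_pos.le]
          gcongr
          exact Real.one_le_rpow hm (by positivity)
        _ = ((2 / C) ^ (1 / (N : ℝ)) + 1) * m ^ (1 / (N : ℝ)) := by ring
    calc (⌈y⌉₊ : ℝ) ^ 2 ≤ (((2 / C) ^ (1 / (N : ℝ)) + 1) * m ^ (1 / (N : ℝ))) ^ 2 := by gcongr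
      _ = ((2 / C) ^ (1 / (N : ℝ)) + 1) ^ 2 * m ^ (2 / (N : ℝ)) := by
        rw [mul_pow, ← Real.rpow_mul_natCast hm_pos.le]
        congr 2
        push_cast
        ring

/-- The Faber–Krahn inequality: a function carried by `A` is compared with its translates by a
ball at least twice as large as `A`. -/
theorem exists_sum_sq_le_card_rpow_mul (hS_gen : Subgroup.closure (S : Set G) = ⊤)
    (hS_sym : ∀ s ∈ S, s⁻¹ ∈ S) {N : ℕ} (hN : N ≠ 0) {C₁ : ℝ} (hC₁ : 0 < C₁)
    (hgrowth : ∀ n : ℕ, 1 ≤ n →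
      C₁ * (n : ℝ) ^ N ≤ (Nat.card {x : G // wordDist S 1 x ≤ n} : ℝ)) :
    ∃ K : ℝ, 0 < K ∧ ∀ (A : Finset G) (w : G → ℝ), (∀ x ∉ A, w x = 0) → Summable (gradSq S w) →
      ∑ x ∈ A, w x ^ 2 ≤ K * (A.card : ℝ) ^ (2 / (N : ℝ)) * ∑' x, gradSq S w x := by
  refine ⟨2 * ((2 / C₁) ^ (1 / (N : ℝ)) + 1) ^ 2, by positivity, fun A w hwA hw => ?_⟩
  have hD : 0 ≤ ∑' x, gradSq S w x := tsum_nonneg (gradSq_nonneg S w)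
  rcases A.eq_empty_or_nonempty with rfl | hA
  · simpa using by positivity
  obtain ⟨n, hn, hcard, hradius⟩ :=
    exists_nat_two_mul_le_mul_pow hN hC₁ (m := A.card) (mod_cast hA.card_pos)
  have hfin := finite_setOf_wordDist_le hS_gen hS_sym n
  have hAB : 2 * A.card ≤ hfin.toFinset.card := by
    rw [← Set.ncard_eq_toFinset_card _ hfin, ← Nat.card_coe_set_eq]
    exact_mod_cast hcard.trans (hgrowth n hn)
  have hB : hfin.toFinset.Nonempty := Finset.card_pos.1 (by have := hA.card_pos; omega)
  calc ∑ x ∈ A, w x ^ 2 ≤ 2 * (n : ℝ) ^ 2 * ∑' x, gradSq S w x :=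
        sum_sq_le_of_two_mul_card_le hS_gen hS_sym hw hwA (fun g hg => by simpa using hg) hB hAB
    _ ≤ _ := by
        rw [mul_assoc 2 (((2 / C₁) ^ (1 / (N : ℝ)) + 1) ^ 2)]
        gcongr

end FaberKrahn

section DyadicLayers

/-- The part of `a` between the heights `2 ^ k` and `2 ^ (k + 1)`; the sum of all layers of a
nonnegative number is the number itself. -/
def layer (k : ℤ) (a : ℝ) : ℝ := min a (2 ^ (k + 1)) - min a (2 ^ k)

lemma two_zpow_le_two_zpow_add_one (k : ℤ) : (2 : ℝ) ^ k ≤ 2 ^ (k + 1) :=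
  zpow_le_zpow_right₀ one_le_two (by lia)

lemma layer_mono (k : ℤ) : Monotone (layer k) := by
  intro a b hab
  have := two_zpow_le_two_zpow_add_one k
  simp only [layer, min_def]
  split_ifs <;> linarith

lemma layer_of_le {k : ℤ} {a : ℝ} (ha : a ≤ 2 ^ k) : layer k a = 0 := by
  rw [layer, min_eq_left ha, min_eq_left (ha.trans (two_zpow_le_two_zpow_add_one k)), sub_self]

lemma layer_of_ge {k : ℤ} {a : ℝ} (ha : 2 ^ (k + 1) ≤ a) : layer k a = 2 ^ k := by
  rw [layer, min_eq_right ha, min_eq_right ((two_zpow_le_two_zpow_add_one k).trans ha),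
    zpow_add_one₀ two_ne_zero]
  ring

lemma sum_layer_sub_le_min_sub (T : Finset ℤ) {a b : ℝ} (hab : b ≤ a) {m : ℤ}
    (hm : ∀ k ∈ T, k < m) :
    ∑ k ∈ T, (layer k a - layer k b) ≤ min a (2 ^ m) - min b (2 ^ m) := by
  induction T using Finset.induction_on_max generalizing m with
  | empty => simpa using min_le_min_right _ hab
  | insert j T hj ih =>
    have htop : layer j a - layer j b + (min a (2 ^ j) - min b (2 ^ j)) =
        min a (2 ^ (j + 1)) - min b (2 ^ (j + 1)) := by
      rw [layer, layer]
      ring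
    have hheight : (2 : ℝ) ^ (j + 1) ≤ 2 ^ m :=
      zpow_le_zpow_right₀ one_le_two (hm j (Finset.mem_insert_self j T))
    rw [Finset.sum_insert fun hjT => (hj j hjT).false]
    have hlow := ih hj
    have hmono : min a (2 ^ (j + 1)) - min b (2 ^ (j + 1)) ≤ min a (2 ^ m) - min b (2 ^ m) := by
      simp only [min_def]
      split_ifs <;> linarith
    linarith

lemma sum_layer_sub_le (T : Finset ℤ) {a b : ℝ} (hab : b ≤ a) :
    ∑ k ∈ T, (layer k a - layer k b) ≤ a - b := by
  obtain ⟨m, hm⟩ := T.exists_le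
  refine (sum_layer_sub_le_min_sub T hab (m := m + 1) fun k hk => by
    have := hm k hk; lia).trans ?_
  simp only [min_def]
  split_ifs <;> linarith

lemma sum_sq_layer_sub_le (T : Finset ℤ) (a b : ℝ) :
    ∑ k ∈ T, (layer k a - layer k b) ^ 2 ≤ (a - b) ^ 2 := by
  wlog hab : b ≤ a generalizing a b
  · simpa only [sub_sq_comm] using this b a (le_of_not_ge hab)
  have hnonneg : ∀ k ∈ T, 0 ≤ layer k a - layer k b := fun k _ => sub_nonneg.2 (layer_mono k hab)
  calc ∑ k ∈ T, (layer k a - layer k b) ^ 2 ≤ (∑ k ∈ T, (layer k a - layer k b)) ^ 2 :=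
        Finset.sum_sq_le_sq_sum_of_nonneg hnonneg
    _ ≤ (a - b) ^ 2 := by
        gcongr
        · exact Finset.sum_nonneg hnonneg
        · exact sum_layer_sub_le T hab

lemma exists_rpow_le_two_rpow_mul_ite {r : ℝ} (hr : 0 < r) {a : ℝ} (ha : 0 ≤ a) :
    ∃ k : ℤ, a ^ r ≤ 2 ^ r * if 2 ^ (k + 1) < a then ((2 : ℝ) ^ (k + 1)) ^ r else 0 := by
  rcases ha.eq_or_lt with rfl | ha
  · refine ⟨0, ?_⟩
    rw [Real.zero_rpow hr.ne']
    positivity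
  · obtain ⟨k, hlt, hle⟩ := exists_mem_Ioc_zpow ha one_lt_two
    refine ⟨k - 1, ?_⟩
    rw [sub_add_cancel, if_pos hlt, ← Real.mul_rpow (by positivity) (by positivity),
      ← zpow_one_add₀ two_ne_zero, add_comm]
    exact Real.rpow_le_rpow ha.le hle hr.le

lemma exists_sum_rpow_le_sum_card {X : Type*} {r : ℝ} (hr : 0 < r) (w : X → ℝ) (F : Finset X) :
    ∃ T : Finset ℤ, ∑ x ∈ F, |w x| ^ r ≤
      2 ^ r * ∑ k ∈ T, ((2 : ℝ) ^ (k + 1)) ^ r * (F.filter fun x => 2 ^ (k + 1) < |w x|).card := by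
  classical
  choose κ hκ using fun x => exists_rpow_le_two_rpow_mul_ite hr (abs_nonneg (w x))
  refine ⟨F.image κ, ?_⟩
  calc ∑ x ∈ F, |w x| ^ r
      ≤ ∑ x ∈ F, 2 ^ r * ∑ k ∈ F.image κ,
          if 2 ^ (k + 1) < |w x| then ((2 : ℝ) ^ (k + 1)) ^ r else 0 := by
        refine Finset.sum_le_sum fun x hx => (hκ x).trans ?_
        gcongr
        exact Finset.single_le_sum
          (f := fun k : ℤ => if 2 ^ (k + 1) < |w x| then ((2 : ℝ) ^ (k + 1)) ^ r else 0)
          (fun k _ => by positivity) (Finset.mem_image_of_mem κ hx)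
    _ = _ := by
        rw [← Finset.mul_sum, Finset.sum_comm]
        simp only [← Finset.sum_filter, Finset.sum_const, nsmul_eq_mul, mul_comm]

end DyadicLayers

section Sobolev

variable [Group G] {S : Finset G} {w : G → ℝ}

lemma sum_gradSq_layer_le (S : Finset G) (w : G → ℝ) (T : Finset ℤ) (x : G) :
    ∑ k ∈ T, gradSq S (fun z => layer k |w z|) x ≤ gradSq S w x := by
  simp only [gradSq]
  rw [Finset.sum_comm]
  exact Finset.sum_le_sum fun s _ => (sum_sq_layer_sub_le T _ _).trans
    (sq_le_sq.2 (abs_abs_sub_abs_le_abs_sub (w (x * s)) (w x)))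

lemma summable_gradSq_layer (hw : Summable (gradSq S w)) (k : ℤ) :
    Summable (gradSq S fun z => layer k |w z|) :=
  .of_nonneg_of_le (gradSq_nonneg S _) (fun x => by simpa using sum_gradSq_layer_le S w {k} x) hw

lemma sum_tsum_gradSq_layer_le (hw : Summable (gradSq S w)) (T : Finset ℤ) :
    ∑ k ∈ T, ∑' x, gradSq S (fun z => layer k |w z|) x ≤ ∑' x, gradSq S w x := by
  rw [← Summable.tsum_finsetSum fun k _ => summable_gradSq_layer hw k]
  exact (summable_sum fun k _ => summable_gradSq_layer hw k).tsum_le_tsum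
    (sum_gradSq_layer_le S w T) hw

lemma card_mul_sq_le_of_faberKrahn {K θ : ℝ}
    (hFK : ∀ (A : Finset G) (w : G → ℝ), (∀ x ∉ A, w x = 0) → Summable (gradSq S w) →
      ∑ x ∈ A, w x ^ 2 ≤ K * (A.card : ℝ) ^ θ * ∑' x, gradSq S w x)
    (hw : Summable (gradSq S w)) {k : ℤ} {A A' : Finset G} (hA : ∀ x, x ∈ A ↔ 2 ^ k < |w x|)
    (hA' : ∀ x ∈ A', 2 ^ (k + 1) ≤ |w x|) :
    (A'.card : ℝ) * (2 ^ k) ^ 2 ≤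
      K * (A.card : ℝ) ^ θ * ∑' x, gradSq S (fun z => layer k |w z|) x := by
  have hsubset : A' ⊆ A := fun x hx =>
    (hA x).2 ((zpow_lt_zpow_right₀ one_lt_two (by lia)).trans_le (hA' x hx))
  calc (A'.card : ℝ) * (2 ^ k) ^ 2 = ∑ x ∈ A', layer k |w x| ^ 2 := by
        rw [← nsmul_eq_mul, ← Finset.sum_const]
        exact Finset.sum_congr rfl fun x hx => by rw [layer_of_ge (hA' x hx)]
    _ ≤ ∑ x ∈ A, layer k |w x| ^ 2 := by gcongr
    _ ≤ _ := hFK A _ (fun x hx => layer_of_le (not_lt.1 (mt (hA x).2 hx)))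
        (summable_gradSq_layer hw k)

lemma rpow_mul_card_le_of_faberKrahn {K θ r : ℝ} (hK : 0 ≤ K) (hθ : 0 ≤ θ) (hr : 0 < r)
    (hrθ : r * (1 - θ) = 2)
    (hFK : ∀ (A : Finset G) (w : G → ℝ), (∀ x ∉ A, w x = 0) → Summable (gradSq S w) →
      ∑ x ∈ A, w x ^ 2 ≤ K * (A.card : ℝ) ^ θ * ∑' x, gradSq S w x)
    (hw_mem : Memlp r w) (hw : Summable (gradSq S w)) (k : ℤ) {A' : Finset G}
    (hA' : ∀ x ∈ A', 2 ^ (k + 1) ≤ |w x|) :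
    ((2 : ℝ) ^ (k + 1)) ^ r * A'.card ≤ 2 ^ r * K * (∑' x, |w x| ^ r) ^ θ *
      ∑' x, gradSq S (fun z => layer k |w z|) x := by
  set t : ℝ := 2 ^ k with ht
  have ht_pos : 0 < t := by positivity
  obtain ⟨A, hA⟩ := (hw_mem.finite_setOf_lt_abs hr ht_pos).exists_finset
  have hD : 0 ≤ ∑' x, gradSq S (fun z => layer k |w z|) x := tsum_nonneg (gradSq_nonneg S _)
  have hweak : t ^ (r * θ) * (A.card : ℝ) ^ θ ≤ (∑' x, |w x| ^ r) ^ θ := by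
    rw [Real.rpow_mul ht_pos.le, ← Real.mul_rpow (by positivity) (by positivity)]
    gcongr
    exact hw_mem.rpow_mul_card_le hr.le ht_pos.le fun x hx => ((hA x).1 hx).le
  have hsplit : t ^ r = t ^ (r * θ) * t ^ 2 := by
    rw [← Real.rpow_add_natCast ht_pos.ne']
    congr 1
    push_cast
    linarith
  calc ((2 : ℝ) ^ (k + 1)) ^ r * A'.card = 2 ^ r * t ^ (r * θ) * (A'.card * t ^ 2) := by
        rw [zpow_add_one₀ two_ne_zero, ← ht, Real.mul_rpow ht_pos.le zero_le_two, hsplit]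
        ring
    _ ≤ 2 ^ r * t ^ (r * θ) * (K * (A.card : ℝ) ^ θ *
          ∑' x, gradSq S (fun z => layer k |w z|) x) := by
        refine mul_le_mul_of_nonneg_left ?_ (by positivity)
        exact card_mul_sq_le_of_faberKrahn hFK hw hA hA'
    _ = 2 ^ r * K * (t ^ (r * θ) * (A.card : ℝ) ^ θ) *
          ∑' x, gradSq S (fun z => layer k |w z|) x := by ring
    _ ≤ _ := by gcongr

/-- Faber–Krahn implies Sobolev: on each dyadic layer the Faber–Krahn inequality combines with the
weak-type bound for the level set, and the layer energies add up to at most the full energy. -/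
theorem lpNorm_sq_le_of_faberKrahn {K θ r : ℝ} (hK : 0 ≤ K) (hθ : 0 ≤ θ) (hr : 0 < r)
    (hrθ : r * (1 - θ) = 2)
    (hFK : ∀ (A : Finset G) (w : G → ℝ), (∀ x ∉ A, w x = 0) → Summable (gradSq S w) →
      ∑ x ∈ A, w x ^ 2 ≤ K * (A.card : ℝ) ^ θ * ∑' x, gradSq S w x)
    (hw_mem : Memlp r w) (hw : Summable (gradSq S w)) :
    lpNorm r w ^ 2 ≤ (2 ^ r) ^ 2 * K * ∑' x, gradSq S w x := by
  set Q := ∑' x, |w x| ^ r with hQ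
  set D := ∑' x, gradSq S w x
  have hQ_nonneg : 0 ≤ Q := tsum_nonneg fun x => by positivity
  have hD_nonneg : 0 ≤ D := tsum_nonneg (gradSq_nonneg S w)
  have hself : Q ≤ (2 ^ r) ^ 2 * K * D * Q ^ θ := by
    refine Real.tsum_le_of_sum_le (fun x => by positivity) fun F => ?_
    obtain ⟨T, hT⟩ := exists_sum_rpow_le_sum_card hr w F
    calc ∑ x ∈ F, |w x| ^ r
        ≤ 2 ^ r * ∑ k ∈ T, 2 ^ r * K * Q ^ θ * ∑' x, gradSq S (fun z => layer k |w z|) x := by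
          refine hT.trans (mul_le_mul_of_nonneg_left (Finset.sum_le_sum fun k _ => ?_)
            (by positivity))
          refine rpow_mul_card_le_of_faberKrahn hK hθ hr hrθ hFK hw_mem hw k fun x hx => ?_
          exact le_of_lt (Finset.mem_filter.1 hx).2
      _ ≤ 2 ^ r * (2 ^ r * K * Q ^ θ * D) := by
          rw [← Finset.mul_sum]
          gcongr
          exact sum_tsum_gradSq_layer_le hw T
      _ = (2 ^ r) ^ 2 * K * D * Q ^ θ := by ring
  have hexp : 0 < 1 - θ := pos_of_mul_pos_right (hrθ ▸ two_pos) hr.le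
  have hnorm : lpNorm r w ^ 2 = Q ^ (1 - θ) := by
    rw [lpNorm, ← hQ, ← Real.rpow_mul_natCast hQ_nonneg, Nat.cast_ofNat, ← hrθ]
    congr 1
    field_simp
  rw [hnorm]
  rcases hQ_nonneg.eq_or_lt with hQ_zero | hQ_pos
  · rw [← hQ_zero, Real.zero_rpow hexp.ne']
    positivity
  · rwa [Real.rpow_sub hQ_pos, Real.rpow_one, div_le_iff₀ (by positivity)]

theorem exists_lpNorm_le_mul_D12Norm (hS_gen : Subgroup.closure (S : Set G) = ⊤)
    (hS_sym : ∀ s ∈ S, s⁻¹ ∈ S) {N : ℕ} (hN : 3 ≤ N) {C₁ : ℝ} (hC₁ : 0 < C₁)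
    (hgrowth : ∀ n : ℕ, 1 ≤ n →
      C₁ * (n : ℝ) ^ N ≤ (Nat.card {x : G // wordDist S 1 x ≤ n} : ℝ)) :
    ∃ C : ℝ, 0 ≤ C ∧ ∀ w : G → ℝ, MemD12 S N w →
      lpNorm (2 * (N : ℝ) / ((N : ℝ) - 2)) w ≤ C * D12Norm S w := by
  obtain ⟨K, hK, hFK⟩ := exists_sum_sq_le_card_rpow_mul hS_gen hS_sym (by lia) hC₁ hgrowth
  have hN_sub : (0 : ℝ) < N - 2 := by
    have : (3 : ℝ) ≤ N := mod_cast hN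
    linarith
  have hN_pos : (0 : ℝ) < N := by linarith
  set r : ℝ := 2 * (N : ℝ) / ((N : ℝ) - 2) with hr
  have hrθ : r * (1 - 2 / (N : ℝ)) = 2 := by
    rw [hr]
    field_simp
  refine ⟨2 ^ r * √K, by positivity, fun w hw => ?_⟩
  have hC_nonneg : 0 ≤ 2 ^ r * √K * D12Norm S w := mul_nonneg (by positivity) (D12Norm_nonneg S w)
  rw [← sq_le_sq₀ (lpNorm_nonneg r w) hC_nonneg, mul_pow, mul_pow, Real.sq_sqrt hK.le, D12Norm_sq]
  exact lpNorm_sq_le_of_faberKrahn hK.le (by positivity) (by positivity) hrθ hFK hw.1 hw.2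

end Sobolev

section HardyLittlewoodSobolev

variable {X : Type*} {δ : X → X → ℝ} {C N α : ℝ}

/-- The balls of `δ` have at most `C * ρ ^ N` points. No metric axiom is assumed on `δ`; in
particular `δ x x` may be positive. -/
def HasVolumeGrowth (δ : X → X → ℝ) (C N : ℝ) : Prop :=
  ∀ (x : X) (F : Finset X) (ρ : ℝ), 0 < ρ → (∀ y ∈ F, δ x y ≤ ρ) → (F.card : ℝ) ≤ C * ρ ^ N

namespace HasVolumeGrowth

lemma exists_pos_lt (hδ : HasVolumeGrowth δ C N) (hN : N ≠ 0) :
    ∃ ρ > 0, ∀ x y, ρ < δ x y := by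
  have hpos : 0 < |C| + 1 := by positivity
  refine ⟨(|C| + 1)⁻¹ ^ N⁻¹, by positivity, fun x y => ?_⟩
  by_contra! hle
  have hcard := hδ x {y} ((|C| + 1)⁻¹ ^ N⁻¹) (by positivity) (by simpa using hle)
  rw [Real.rpow_inv_rpow (by positivity) hN, Finset.card_singleton, Nat.cast_one,
    ← div_eq_mul_inv, one_le_div hpos] at hcard
  linarith [le_abs_self C]

lemma sum_rpow_le_of_shell (hδ : HasVolumeGrowth δ C N) {s : ℝ} (hs : 0 ≤ s) {x : X} {F : Finset X}
    {ρ : ℝ} (hρ : 0 < ρ) (hF : ∀ y ∈ F, ρ < δ x y ∧ δ x y ≤ 2 * ρ) :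
    ∑ y ∈ F, δ x y ^ (-s) ≤ C * 2 ^ N * ρ ^ (N - s) :=
  calc ∑ y ∈ F, δ x y ^ (-s) ≤ ∑ _y ∈ F, ρ ^ (-s) := Finset.sum_le_sum fun y hy =>
        Real.rpow_le_rpow_of_nonpos hρ (hF y hy).1.le (neg_nonpos.2 hs)
    _ = F.card * ρ ^ (-s) := by rw [Finset.sum_const, nsmul_eq_mul]
    _ ≤ C * (2 * ρ) ^ N * ρ ^ (-s) := by
        gcongr
        exact hδ x F (2 * ρ) (by positivity) fun y hy => (hF y hy).2
    _ = C * 2 ^ N * ρ ^ (N - s) := by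
        rw [Real.mul_rpow zero_le_two hρ.le, sub_eq_add_neg, Real.rpow_add hρ]
        ring

lemma sum_rpow_le_of_annulus (hδ : HasVolumeGrowth δ C N) {s : ℝ} (hs : 0 ≤ s) {x : X} {ρ : ℝ}
    (hρ : 0 < ρ) {k : ℕ} {F : Finset X} (hF : ∀ y ∈ F, ρ < δ x y ∧ δ x y ≤ 2 ^ k * ρ) :
    ∑ y ∈ F, δ x y ^ (-s) ≤ C * 2 ^ N * ρ ^ (N - s) * ∑ i ∈ Finset.range k, (2 ^ (N - s)) ^ i := by
  induction k generalizing F with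
  | zero =>
    have hempty : F = ∅ := Finset.eq_empty_of_forall_notMem fun y hy => by
      have := hF y hy
      rw [pow_zero, one_mul] at this
      exact this.1.not_ge this.2
    simp [hempty]
  | succ k ih =>
    rw [← Finset.sum_filter_add_sum_filter_not F fun y => δ x y ≤ 2 ^ k * ρ, Finset.sum_range_succ,
      mul_add]
    have hinner := ih (F := F.filter fun y => δ x y ≤ 2 ^ k * ρ) fun y hy =>
      ⟨(hF y (Finset.mem_filter.1 hy).1).1, (Finset.mem_filter.1 hy).2⟩
    have hshell := hδ.sum_rpow_le_of_shell hs (x := x) (ρ := 2 ^ k * ρ)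
      (F := F.filter fun y => ¬ δ x y ≤ 2 ^ k * ρ) (by positivity) fun y hy => by
        refine ⟨not_le.1 (Finset.mem_filter.1 hy).2, ?_⟩
        rw [← mul_assoc, ← pow_succ']
        exact (hF y (Finset.mem_filter.1 hy).1).2
    rw [Real.mul_rpow (by positivity) hρ.le, ← Real.rpow_pow_comm zero_le_two] at hshell
    linarith

lemma sum_rpow_le_of_le (hδ : HasVolumeGrowth δ C N) (hC : 0 ≤ C) {s : ℝ} (hs : 0 ≤ s) (hsN : s < N)
    {x : X} {F : Finset X} {ρ : ℝ} (hρ : 0 < ρ) (hF : ∀ y ∈ F, δ x y ≤ ρ) :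
    ∑ y ∈ F, δ x y ^ (-s) ≤ C * 2 ^ N / (2 ^ (N - s) - 1) * ρ ^ (N - s) := by
  obtain ⟨ρ₀, hρ₀, hlt⟩ := hδ.exists_pos_lt (hs.trans_lt hsN).ne'
  have hratio : (1 : ℝ) < 2 ^ (N - s) := Real.one_lt_rpow one_lt_two (sub_pos.2 hsN)
  obtain ⟨k, hk⟩ := pow_unbounded_of_one_lt (ρ / ρ₀) one_lt_two
  have hmul : 2 ^ k * (ρ / 2 ^ k) = ρ := by field_simp
  have hannulus := hδ.sum_rpow_le_of_annulus hs (x := x) (ρ := ρ / 2 ^ k) (k := k) (by positivity)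
    fun y hy => ⟨((div_lt_comm₀ hρ₀ (by positivity)).1 hk).trans (hlt x y), by
      rw [hmul]
      exact hF y hy⟩
  calc ∑ y ∈ F, δ x y ^ (-s)
      ≤ C * 2 ^ N * (ρ / 2 ^ k) ^ (N - s) * ∑ i ∈ Finset.range k, (2 ^ (N - s)) ^ i := hannulus
    _ ≤ C * 2 ^ N * (ρ / 2 ^ k) ^ (N - s) * ((2 ^ (N - s)) ^ k / (2 ^ (N - s) - 1)) := by
        rw [geom_sum_eq hratio.ne']
        have := sub_pos.2 hratio
        gcongr
        linarith
    _ = C * 2 ^ N / (2 ^ (N - s) - 1) * (2 ^ k * (ρ / 2 ^ k)) ^ (N - s) := by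
        rw [Real.mul_rpow (by positivity) (by positivity), Real.rpow_pow_comm zero_le_two]
        ring
    _ = C * 2 ^ N / (2 ^ (N - s) - 1) * ρ ^ (N - s) := by rw [hmul]

lemma sum_rpow_le_of_lt (hδ : HasVolumeGrowth δ C N) (hC : 0 ≤ C) {s : ℝ} (hs : 0 ≤ s) (hNs : N < s)
    {x : X} {F : Finset X} {ρ : ℝ} (hρ : 0 < ρ) (hF : ∀ y ∈ F, ρ < δ x y) :
    ∑ y ∈ F, δ x y ^ (-s) ≤ C * 2 ^ N / (1 - 2 ^ (N - s)) * ρ ^ (N - s) := by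
  have hratio : (2 : ℝ) ^ (N - s) < 1 := Real.rpow_lt_one_of_one_lt_of_neg one_lt_two (by linarith)
  obtain ⟨k, hk⟩ : ∃ k : ℕ, ∀ y ∈ F, δ x y ≤ 2 ^ k * ρ :=
    (((eventually_all_finset F).2 fun y _ => ((tendsto_pow_atTop_atTop_of_one_lt
      one_lt_two).atTop_mul_const hρ).eventually_ge_atTop (δ x y))).exists
  calc ∑ y ∈ F, δ x y ^ (-s)
      ≤ C * 2 ^ N * ρ ^ (N - s) * ∑ i ∈ Finset.range k, (2 ^ (N - s)) ^ i :=
        hδ.sum_rpow_le_of_annulus hs hρ fun y hy => ⟨hF y hy, hk y hy⟩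
    _ ≤ C * 2 ^ N * ρ ^ (N - s) * (1 - 2 ^ (N - s))⁻¹ := by
        gcongr
        rw [← tsum_geometric_of_lt_one (by positivity) hratio]
        exact (summable_geometric_of_lt_one (by positivity) hratio).sum_le_tsum _
          fun i _ => by positivity
    _ = C * 2 ^ N / (1 - 2 ^ (N - s)) * ρ ^ (N - s) := by ring

end HasVolumeGrowth

/-- Young's inequality with exponents `2N / (N + α)` and `2N / (N - α)`. -/
lemma mul_rpow_sub_le (hα : 0 < α) (hαN : α < N) {a d : ℝ} (ha : 0 ≤ a) (hd : 0 ≤ d) :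
    a * d ^ (α - N) ≤ a ^ (2 * N / (N + α)) + d ^ (-(2 * N)) := by
  have hN : 0 < N := hα.trans hαN
  have hsub : 0 < N - α := sub_pos.2 hαN
  have hadd : 0 < N + α := by linarith
  have hconj : (2 * N / (N + α)).HolderConjugate (2 * N / (N - α)) := by
    rw [Real.holderConjugate_iff]
    refine ⟨(one_lt_div hadd).2 (by linarith), ?_⟩
    field_simp
    ring
  have hpow : (d ^ (α - N)) ^ (2 * N / (N - α)) = d ^ (-(2 * N)) := by
    rw [← Real.rpow_mul hd]
    congr 1
    field_simp
    ring
  calc a * d ^ (α - N)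
      ≤ a ^ (2 * N / (N + α)) / (2 * N / (N + α)) +
          (d ^ (α - N)) ^ (2 * N / (N - α)) / (2 * N / (N - α)) :=
        Real.young_inequality_of_nonneg ha (by positivity) hconj
    _ ≤ a ^ (2 * N / (N + α)) + d ^ (-(2 * N)) := by
        rw [hpow]
        exact add_le_add (div_le_self (by positivity) hconj.lt.le)
          (div_le_self (by positivity) hconj.symm.lt.le)

lemma sum_rpow_mul_mul_le_of_near (hδ : HasVolumeGrowth δ C N) (hC : 0 ≤ C) (hα : 0 < α)
    (hαN : α < N) {f : X → ℝ} {x : X} (hfx_pos : 0 < f x) {F : Finset X} (hfx : ∀ y ∈ F, f y ≤ f x)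
    (hF : ∀ y ∈ F, δ x y ≤ f x ^ (-(2 * N / (N + α)) / N)) :
    ∑ y ∈ F, δ x y ^ (α - N) * (f x * f y) ≤
      C * 2 ^ N / (2 ^ α - 1) * f x ^ (2 * N / (N + α)) := by
  have hN : 0 < N := hα.trans hαN
  obtain ⟨ρ₀, hρ₀, hlt⟩ := hδ.exists_pos_lt hN.ne'
  have hsum := hδ.sum_rpow_le_of_le hC (s := N - α) (by linarith) (by linarith) (by positivity) hF
  rw [neg_sub, sub_sub_cancel, ← Real.rpow_mul hfx_pos.le] at hsum
  have hbalance : f x ^ (-(2 * N / (N + α)) / N * α) * f x ^ 2 = f x ^ (2 * N / (N + α)) := by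
    rw [← Real.rpow_add_natCast hfx_pos.ne']
    congr 1
    field_simp
    ring
  calc ∑ y ∈ F, δ x y ^ (α - N) * (f x * f y)
      ≤ ∑ y ∈ F, δ x y ^ (α - N) * f x ^ 2 := by
        refine Finset.sum_le_sum fun y hy => ?_
        have := (hρ₀.trans (hlt x y)).le
        rw [sq]
        gcongr
        exact hfx y hy
    _ ≤ C * 2 ^ N / (2 ^ α - 1) * f x ^ (-(2 * N / (N + α)) / N * α) * f x ^ 2 := by
        rw [← Finset.sum_mul]
        gcongr
    _ = C * 2 ^ N / (2 ^ α - 1) * f x ^ (2 * N / (N + α)) := by rw [mul_assoc, hbalance]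

lemma sum_rpow_mul_mul_le_of_far (hδ : HasVolumeGrowth δ C N) (hC : 0 ≤ C) (hα : 0 < α)
    (hαN : α < N) {f : X → ℝ} (hf : ∀ x, 0 ≤ f x) {x : X} (hfx_pos : 0 < f x) {F : Finset X}
    (hf_sum : ∑ y ∈ F, f y ^ (2 * N / (N + α)) ≤ 1)
    (hF : ∀ y ∈ F, f x ^ (-(2 * N / (N + α)) / N) < δ x y) :
    ∑ y ∈ F, δ x y ^ (α - N) * (f x * f y) ≤
      (1 + C * 2 ^ N / (1 - 2 ^ (-N))) * f x ^ (2 * N / (N + α)) := by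
  have hN : 0 < N := hα.trans hαN
  obtain ⟨ρ₀, hρ₀, hlt⟩ := hδ.exists_pos_lt hN.ne'
  have hsum := hδ.sum_rpow_le_of_lt hC (s := 2 * N) (by linarith) (by linarith) (by positivity) hF
  rw [show N - 2 * N = -N by ring, ← Real.rpow_mul hfx_pos.le, mul_neg, div_mul_cancel₀ _ hN.ne',
    neg_neg] at hsum
  calc ∑ y ∈ F, δ x y ^ (α - N) * (f x * f y)
      ≤ ∑ y ∈ F, (f x ^ (2 * N / (N + α)) * f y ^ (2 * N / (N + α)) + δ x y ^ (-(2 * N))) := by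
        refine Finset.sum_le_sum fun y _ => ?_
        rw [mul_comm, ← Real.mul_rpow (hf x) (hf y)]
        exact mul_rpow_sub_le hα hαN (mul_nonneg (hf x) (hf y)) (hρ₀.trans (hlt x y)).le
    _ ≤ f x ^ (2 * N / (N + α)) * 1 +
          C * 2 ^ N / (1 - 2 ^ (-N)) * f x ^ (2 * N / (N + α)) := by
        rw [Finset.sum_add_distrib, ← Finset.mul_sum]
        gcongr
    _ = (1 + C * 2 ^ N / (1 - 2 ^ (-N))) * f x ^ (2 * N / (N + α)) := by ring

/-- The interaction of `x` with the smaller values of `f` is split at the radius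
`f x ^ (-q / N)`, `q = 2N / (N + α)`, where the near and the far part are of the same size. -/
lemma sum_rpow_mul_mul_le_of_le (hδ : HasVolumeGrowth δ C N) (hC : 0 ≤ C) (hα : 0 < α) (hαN : α < N)
    {f : X → ℝ} (hf : ∀ x, 0 ≤ f x) {x : X} {F : Finset X} (hfx : ∀ y ∈ F, f y ≤ f x)
    (hf_sum : ∑ y ∈ F, f y ^ (2 * N / (N + α)) ≤ 1) :
    ∑ y ∈ F, δ x y ^ (α - N) * (f x * f y) ≤
      (C * 2 ^ N / (2 ^ α - 1) + (1 + C * 2 ^ N / (1 - 2 ^ (-N)))) *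
        f x ^ (2 * N / (N + α)) := by
  have hq : 2 * N / (N + α) ≠ 0 := by
    have hN : 0 < N := hα.trans hαN
    positivity
  rcases (hf x).eq_or_lt with hzero | hpos
  · simp [← hzero, Real.zero_rpow hq]
  rw [← Finset.sum_filter_add_sum_filter_not F fun y =>
    δ x y ≤ f x ^ (-(2 * N / (N + α)) / N), add_mul]
  refine add_le_add ?_ ?_
  · exact sum_rpow_mul_mul_le_of_near hδ hC hα hαN hpos
      (fun y hy => hfx y (Finset.mem_filter.1 hy).1) fun y hy => (Finset.mem_filter.1 hy).2
  · refine sum_rpow_mul_mul_le_of_far hδ hC hα hαN hf hpos ?_ fun y hy =>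
      not_le.1 (Finset.mem_filter.1 hy).2
    exact (Finset.sum_le_sum_of_subset_of_nonneg (Finset.filter_subset _ F)
      fun y _ _ => Real.rpow_nonneg (hf y) _).trans hf_sum

/-- The constant which the proof gives in the Hardy–Littlewood–Sobolev inequality. -/
def hlsConst (C N α : ℝ) : ℝ :=
  2 * (C * 2 ^ N / (2 ^ α - 1) + (1 + C * 2 ^ N / (1 - 2 ^ (-N))))

lemma hlsConst_nonneg (hC : 0 ≤ C) (hα : 0 < α) (hαN : α < N) : 0 ≤ hlsConst C N α := by
  have hnear : (0 : ℝ) < 2 ^ α - 1 := sub_pos.2 (Real.one_lt_rpow one_lt_two hα)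
  have hfar : (0 : ℝ) < 1 - 2 ^ (-N) :=
    sub_pos.2 (Real.rpow_lt_one_of_one_lt_of_neg one_lt_two (by linarith))
  unfold hlsConst
  positivity

lemma sum_sum_rpow_mul_mul_le_of_sum_le_one (hδ : HasVolumeGrowth δ C N) (hC : 0 ≤ C)
    (hδ_symm : ∀ x y, δ x y = δ y x) (hα : 0 < α) (hαN : α < N) {f : X → ℝ} (hf : ∀ x, 0 ≤ f x)
    {F : Finset X} (hf_sum : ∑ x ∈ F, f x ^ (2 * N / (N + α)) ≤ 1) :
    ∑ x ∈ F, ∑ y ∈ F, δ x y ^ (α - N) * (f x * f y) ≤ hlsConst C N α := by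
  obtain ⟨ρ₀, hρ₀, hlt⟩ := hδ.exists_pos_lt (hα.trans hαN).ne'
  set g : X → X → ℝ := fun x y => δ x y ^ (α - N) * (f x * f y) with hg
  have hg_nonneg : ∀ x y, 0 ≤ g x y := fun x y =>
    mul_nonneg (Real.rpow_nonneg (hρ₀.trans (hlt x y)).le _) (mul_nonneg (hf x) (hf y))
  have hg_symm : ∀ x y, g x y = g y x := fun x y => by rw [hg]; simp only [hδ_symm x y, mul_comm]
  have hsplit : ∀ x y, g x y ≤
      (if f y ≤ f x then g x y else 0) + if f x ≤ f y then g y x else 0 := fun x y => by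
    have := hg_nonneg x y
    have := hg_symm x y
    have := le_total (f x) (f y)
    split_ifs <;> grind
  have hrow : ∑ x ∈ F, ∑ y ∈ F, (if f y ≤ f x then g x y else 0) ≤ hlsConst C N α / 2 := by
    have hrow_le : ∀ x, ∑ y ∈ F, (if f y ≤ f x then g x y else 0) ≤
        hlsConst C N α / 2 * f x ^ (2 * N / (N + α)) := fun x => by
      rw [← Finset.sum_filter, hlsConst, mul_div_cancel_left₀ _ two_ne_zero]
      refine sum_rpow_mul_mul_le_of_le hδ hC hα hαN hf (fun y hy => (Finset.mem_filter.1 hy).2) ?_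
      exact (Finset.sum_le_sum_of_subset_of_nonneg (Finset.filter_subset _ F)
        fun y _ _ => Real.rpow_nonneg (hf y) _).trans hf_sum
    refine (Finset.sum_le_sum fun x _ => hrow_le x).trans ?_
    rw [← Finset.mul_sum]
    exact mul_le_of_le_one_right (div_nonneg (hlsConst_nonneg hC hα hαN) zero_le_two) hf_sum
  calc ∑ x ∈ F, ∑ y ∈ F, g x y
      ≤ ∑ x ∈ F, ∑ y ∈ F, ((if f y ≤ f x then g x y else 0) + if f x ≤ f y then g y x else 0) :=
        Finset.sum_le_sum fun x _ => Finset.sum_le_sum fun y _ => hsplit x y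
    _ = 2 * ∑ x ∈ F, ∑ y ∈ F, (if f y ≤ f x then g x y else 0) := by
        simp only [Finset.sum_add_distrib]
        rw [Finset.sum_comm (f := fun x y => if f x ≤ f y then g y x else 0), two_mul]
    _ ≤ hlsConst C N α := by linarith

lemma sum_sum_rpow_mul_mul_le (hδ : HasVolumeGrowth δ C N) (hC : 0 ≤ C)
    (hδ_symm : ∀ x y, δ x y = δ y x) (hα : 0 < α) (hαN : α < N) {f : X → ℝ} (hf : ∀ x, 0 ≤ f x)
    (hf_mem : Memlp (2 * N / (N + α)) f) (F : Finset X) :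
    ∑ x ∈ F, ∑ y ∈ F, δ x y ^ (α - N) * (f x * f y) ≤
      hlsConst C N α * lpNorm (2 * N / (N + α)) f ^ 2 := by
  have hN : 0 < N := hα.trans hαN
  have hq : 0 < 2 * N / (N + α) := by positivity
  set L := lpNorm (2 * N / (N + α)) f
  have hfL : ∀ x, f x ≤ L := fun x => (le_abs_self _).trans (hf_mem.abs_le_lpNorm hq x)
  have hL_nonneg : 0 ≤ L := lpNorm_nonneg _ f
  rcases hL_nonneg.eq_or_lt with hL | hL
  · have hzero : ∀ x, f x = 0 := fun x => le_antisymm ((hfL x).trans hL.ge) (hf x)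
    simpa [hzero] using mul_nonneg (hlsConst_nonneg hC hα hαN) (sq_nonneg L)
  have hnormalized : ∑ x ∈ F, (f x / L) ^ (2 * N / (N + α)) ≤ 1 := by
    rw [Finset.sum_congr rfl fun x _ => Real.div_rpow (hf x) hL.le _, ← Finset.sum_div,
      div_le_one (Real.rpow_pos_of_pos hL _)]
    simpa only [abs_of_nonneg (hf _)] using hf_mem.sum_rpow_le hq.ne' F
  have hbound := sum_sum_rpow_mul_mul_le_of_sum_le_one hδ hC hδ_symm hα hαN
    (fun x => div_nonneg (hf x) hL.le) hnormalized
  simp only [div_mul_div_comm] at hbound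
  simp only [← mul_div_assoc, ← Finset.sum_div] at hbound
  rwa [div_le_iff₀ (mul_pos hL hL), ← sq] at hbound

lemma exists_summable_and_conv_le (hδ : HasVolumeGrowth δ C N) (hC : 0 ≤ C) (hα : 0 < α)
    (hαN : α < N) {R : X → X → ℝ} (hR : ∀ x y, 0 ≤ R x y) {c : ℝ} (hc : 0 ≤ c)
    (hRδ : ∀ x y, R x y ≤ c * δ x y ^ (α - N)) :
    ∃ K, ∀ f : X → ℝ, (∀ x, 0 ≤ f x) → Memlp (2 * N / (N + α)) f → ∀ x,
      Summable (fun y => R x y * f y) ∧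
        conv R f x ≤ c * (lpNorm (2 * N / (N + α)) f ^ (2 * N / (N + α)) + K) := by
  have hN : 0 < N := hα.trans hαN
  have hq : 2 * N / (N + α) ≠ 0 := by positivity
  obtain ⟨ρ, hρ, hlt⟩ := hδ.exists_pos_lt hN.ne'
  have hδ_nonneg : ∀ x y, 0 ≤ δ x y := fun x y => (hρ.trans (hlt x y)).le
  have hkernel_sum : ∀ x (F : Finset X), ∑ y ∈ F, δ x y ^ (-(2 * N)) ≤ _ := fun x F =>
    hδ.sum_rpow_le_of_lt hC (by linarith) (by linarith) hρ fun y _ => hlt x y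
  have hkernel_nonneg : ∀ x y, 0 ≤ δ x y ^ (-(2 * N)) := fun x y =>
    Real.rpow_nonneg (hδ_nonneg x y) _
  refine ⟨C * 2 ^ N / (1 - 2 ^ (N - 2 * N)) * ρ ^ (N - 2 * N), fun f hf hf_mem x => ?_⟩
  have hkernel := summable_of_sum_le (hkernel_nonneg x) (hkernel_sum x)
  have hmajorant := (Summable.add hf_mem hkernel).mul_left c
  have hle : ∀ y, R x y * f y ≤ c * (|f y| ^ (2 * N / (N + α)) + δ x y ^ (-(2 * N))) := fun y =>
    calc R x y * f y ≤ c * (f y * δ x y ^ (α - N)) := by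
          rw [mul_comm (f y), ← mul_assoc]
          exact mul_le_mul_of_nonneg_right (hRδ x y) (hf y)
      _ ≤ c * (|f y| ^ (2 * N / (N + α)) + δ x y ^ (-(2 * N))) := by
          rw [abs_of_nonneg (hf y)]
          exact mul_le_mul_of_nonneg_left (mul_rpow_sub_le hα hαN (hf y) (hδ_nonneg x y)) hc
  have hsum := Summable.of_nonneg_of_le (fun y => mul_nonneg (hR x y) (hf y)) hle hmajorant
  refine ⟨hsum, (hsum.tsum_le_tsum hle hmajorant).trans ?_⟩
  rw [tsum_mul_left, Summable.tsum_add hf_mem hkernel, lpNorm_rpow hq]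
  gcongr
  exact Real.tsum_le_of_sum_le (hkernel_nonneg x) (hkernel_sum x)

theorem summable_conv_mul_and_tsum_le (hδ : HasVolumeGrowth δ C N) (hC : 0 ≤ C)
    (hδ_symm : ∀ x y, δ x y = δ y x) (hα : 0 < α) (hαN : α < N) {R : X → X → ℝ}
    (hR : ∀ x y, 0 ≤ R x y) {c : ℝ} (hc : 0 ≤ c) (hRδ : ∀ x y, R x y ≤ c * δ x y ^ (α - N))
    {f : X → ℝ} (hf : ∀ x, 0 ≤ f x) (hf_mem : Memlp (2 * N / (N + α)) f) :
    Summable (fun x => conv R f x * f x) ∧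
      ∑' x, conv R f x * f x ≤ c * hlsConst C N α * lpNorm (2 * N / (N + α)) f ^ 2 := by
  classical
  obtain ⟨K, hK⟩ := exists_summable_and_conv_le hδ hC hα hαN hR hc hRδ
  have hrow : ∀ x, Summable fun y => R x y * f y := fun x => (hK f hf hf_mem x).1
  have hterm : ∀ x y, 0 ≤ R x y * f y * f x := fun x y =>
    mul_nonneg (mul_nonneg (hR x y) (hf y)) (hf x)
  have hsquare : ∀ F : Finset X, ∑ x ∈ F, ∑ y ∈ F, R x y * f y * f x ≤
      c * hlsConst C N α * lpNorm (2 * N / (N + α)) f ^ 2 := fun F => by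
    refine le_trans ?_ ((mul_le_mul_of_nonneg_left
      (sum_sum_rpow_mul_mul_le hδ hC hδ_symm hα hαN hf hf_mem F) hc).trans_eq
        (mul_assoc _ _ _).symm)
    simp only [Finset.mul_sum]
    refine Finset.sum_le_sum fun x _ => Finset.sum_le_sum fun y _ => ?_
    rw [mul_assoc, mul_comm (f y), ← mul_assoc c]
    exact mul_le_mul_of_nonneg_right (hRδ x y) (mul_nonneg (hf x) (hf y))
  have hpartial : ∀ F : Finset X, ∑ x ∈ F, conv R f x * f x ≤
      c * hlsConst C N α * lpNorm (2 * N / (N + α)) f ^ 2 := fun F => by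
    simp only [conv, ← tsum_mul_right]
    rw [← Summable.tsum_finsetSum fun x _ => (hrow x).mul_right (f x)]
    refine Real.tsum_le_of_sum_le (fun y => Finset.sum_nonneg fun x _ => hterm x y) fun F' => ?_
    rw [Finset.sum_comm]
    calc ∑ x ∈ F, ∑ y ∈ F', R x y * f y * f x
        ≤ ∑ x ∈ F ∪ F', ∑ y ∈ F ∪ F', R x y * f y * f x :=
          (Finset.sum_le_sum fun x _ => Finset.sum_le_sum_of_subset_of_nonneg
            Finset.subset_union_right fun y _ _ => hterm x y).trans <|
          Finset.sum_le_sum_of_subset_of_nonneg Finset.subset_union_left fun x _ _ =>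
            Finset.sum_nonneg fun y _ => hterm x y
      _ ≤ _ := hsquare (F ∪ F')
  have hconv : ∀ x, 0 ≤ conv R f x * f x := fun x =>
    mul_nonneg (tsum_nonneg fun y => mul_nonneg (hR x y) (hf y)) (hf x)
  exact ⟨summable_of_sum_le hconv hpartial, Real.tsum_le_of_sum_le hconv hpartial⟩

theorem tendsto_tsum_mul_conv_mul_zero {ι : Type*} {l : Filter ι} [l.NeBot]
    (hδ : HasVolumeGrowth δ C N) (hC : 0 ≤ C) (hδ_symm : ∀ x y, δ x y = δ y x) (hα : 0 < α)
    (hαN : α < N) {R : X → X → ℝ} (hR : ∀ x y, 0 ≤ R x y) {c : ℝ} (hc : 0 ≤ c)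
    (hRδ : ∀ x y, R x y ≤ c * δ x y ^ (α - N)) {f : ι → X → ℝ} (hf : ∀ i x, 0 ≤ f i x)
    (hf_mem : ∀ i, Memlp (2 * N / (N + α)) (f i)) {B : ℝ}
    (hB : ∀ i, lpNorm (2 * N / (N + α)) (f i) ≤ B)
    (hlim : ∀ x, Tendsto (fun i => f i x) l (𝓝 0)) {h : X → ℝ} (hh : Tendsto h cofinite (𝓝 0)) :
    Tendsto (fun i => ∑' x, h x * (conv R (f i) x * f i x)) l (𝓝 0) := by
  have hN : 0 < N := hα.trans hαN
  have hq : 0 < 2 * N / (N + α) := by positivity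
  obtain ⟨K, hK⟩ := exists_summable_and_conv_le hδ hC hα hαN hR hc hRδ
  have hconv_nonneg : ∀ i x, 0 ≤ conv R (f i) x := fun i x =>
    tsum_nonneg fun y => mul_nonneg (hR x y) (hf i y)
  have hconv_le : ∀ i x, conv R (f i) x ≤ c * (B ^ (2 * N / (N + α)) + K) := fun i x =>
    (hK (f i) (hf i) (hf_mem i) x).2.trans <| by
      gcongr
      · exact lpNorm_nonneg _ _
      · exact hB i
  have hpointwise : ∀ x, Tendsto (fun i => conv R (f i) x * f i x) l (𝓝 0) := fun x =>
    squeeze_zero (fun i => mul_nonneg (hconv_nonneg i x) (hf i x))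
      (fun i => mul_le_mul_of_nonneg_right (hconv_le i x) (hf i x))
      (by simpa using (hlim x).const_mul (c * (B ^ (2 * N / (N + α)) + K)))
  have henergy := fun i => summable_conv_mul_and_tsum_le hδ hC hδ_symm hα hαN hR hc hRδ (hf i)
    (hf_mem i)
  have henergy_le : ∀ i, ∑' x, conv R (f i) x * f i x ≤ c * hlsConst C N α * B ^ 2 := fun i =>
    (henergy i).2.trans <| by
      have := hlsConst_nonneg hC hα hαN
      have := lpNorm_nonneg (2 * N / (N + α)) (f i)
      gcongr
      exact hB i
  simpa using tendsto_tsum_mul_of_tendsto_cofinite_zero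
    (fun i x => mul_nonneg (hconv_nonneg i x) (hf i x)) (fun i => (henergy i).1) henergy_le
    hpointwise hh

end HardyLittlewoodSobolev

section TruncatedWordMetric

variable [Group G] {S : Finset G}

lemma wordDist_self (S : Finset G) (x : G) : wordDist S x x = 0 :=
  Nat.sInf_eq_zero.2 <| .inl ⟨[], by simp⟩

/-- The word metric raised to `1` on the diagonal, so that the bounds on `R_α` on and off the
diagonal become the single bound `R_α ≤ c * truncDist ^ (α - N)`. -/
def truncDist (S : Finset G) (x y : G) : ℝ := max 1 (wordDist S x y)

lemma hasVolumeGrowth_truncDist (hS_gen : Subgroup.closure (S : Set G) = ⊤)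
    (hS_sym : ∀ s ∈ S, s⁻¹ ∈ S) {N : ℕ} {C : ℝ} (hC : 0 ≤ C)
    (hgrowth : ∀ n : ℕ, 1 ≤ n →
      (Nat.card {x : G // wordDist S 1 x ≤ n} : ℝ) ≤ C * (n : ℝ) ^ N) :
    HasVolumeGrowth (truncDist S) C N := by
  intro x F ρ hρ hF
  rw [Real.rpow_natCast]
  rcases F.eq_empty_or_nonempty with rfl | ⟨y, hy⟩
  · simpa using mul_nonneg hC (by positivity)
  have hρ_one : 1 ≤ ρ := (le_max_left _ _).trans (hF y hy)
  have hcard : F.card ≤ Nat.card {g : G // wordDist S 1 g ≤ ⌊ρ⌋₊} := by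
    have hfin := finite_setOf_wordDist_le hS_gen hS_sym ⌊ρ⌋₊
    have hball : F.card ≤ hfin.toFinset.card := by
      refine Finset.card_le_card_of_injOn (x⁻¹ * ·) (fun y hy => ?_) (mul_right_injective _).injOn
      simpa [← wordDist_eq_wordDist_one] using Nat.le_floor ((le_max_right _ _).trans (hF y hy))
    rwa [← Set.ncard_eq_toFinset_card _ hfin, ← Nat.card_coe_set_eq] at hball
  calc (F.card : ℝ) ≤ Nat.card {g : G // wordDist S 1 g ≤ ⌊ρ⌋₊} := mod_cast hcard
    _ ≤ C * (⌊ρ⌋₊ : ℝ) ^ N := hgrowth _ ((Nat.one_le_floor_iff ρ).2 hρ_one)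
    _ ≤ C * ρ ^ N := by
        gcongr
        exact Nat.floor_le hρ.le

lemma le_mul_truncDist_rpow {R : G → G → ℝ} {c s : ℝ} (hc : 0 ≤ c) (hs : s ≠ 0)
    (hR : ∀ x y : G, x ≠ y → R x y ≤ c * (wordDist S x y : ℝ) ^ s) (hR_diag : ∀ x, R x x ≤ c)
    (x y : G) : R x y ≤ c * truncDist S x y ^ s := by
  rcases eq_or_ne x y with rfl | hxy
  · simpa [truncDist, wordDist_self] using hR_diag x
  refine (hR x y hxy).trans (mul_le_mul_of_nonneg_left ?_ hc)
  rcases (wordDist S x y).eq_zero_or_pos with hzero | hpos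
  · simp [truncDist, hzero, Real.zero_rpow hs]
  · rw [truncDist, max_eq_right (mod_cast hpos)]

end TruncatedWordMetric

section Compactness

variable [Group G] {S : Finset G} {N : ℕ} {M : ℝ}

lemma two_mul_div_sub_two_pos (hN : 3 ≤ N) : 0 < 2 * (N : ℝ) / ((N : ℝ) - 2) := by
  have : (3 : ℝ) ≤ N := mod_cast hN
  exact div_pos (by linarith) (by linarith)

lemma MemD12.sub (hN : 3 ≤ N) {u v : G → ℝ} (hu : MemD12 S N u) (hv : MemD12 S N v) :
    MemD12 S N fun x => u x - v x :=
  ⟨hu.1.sub (two_mul_div_sub_two_pos hN) hv.1, summable_gradSq_sub hu.2 hv.2⟩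

lemma tsum_gradSq_le_sq {u : G → ℝ} (hu : D12Norm S u ≤ M) : ∑' x, gradSq S u x ≤ M ^ 2 := by
  rw [← D12Norm_sq]
  exact pow_le_pow_left₀ (D12Norm_nonneg S u) hu 2

lemma D12Norm_sub_le_two_mul {u v : G → ℝ} (hu : Summable (gradSq S u))
    (hv : Summable (gradSq S v)) (huM : D12Norm S u ≤ M) (hvM : D12Norm S v ≤ M) :
    D12Norm S (fun x => u x - v x) ≤ 2 * M := by
  have hM : 0 ≤ M := (D12Norm_nonneg S u).trans huM
  rw [← sq_le_sq₀ (D12Norm_nonneg S _) (by positivity), D12Norm_sq]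
  linarith [tsum_gradSq_sub_le hu hv, tsum_gradSq_le_sq huM, tsum_gradSq_le_sq hvM]

theorem tendsto_tsum_mul_gradSq {ι : Type*} {l : Filter ι} [l.NeBot] {u : ι → G → ℝ} {v : G → ℝ}
    (hu : ∀ i, Summable (gradSq S (u i))) (hM : ∀ i, D12Norm S (u i) ≤ M)
    (hlim : ∀ x, Tendsto (fun i => u i x) l (𝓝 (v x))) {h : G → ℝ}
    (hh : Tendsto h cofinite (𝓝 0)) :
    Tendsto (fun i => ∑' x, h x * gradSq S (u i) x) l (𝓝 (∑' x, h x * gradSq S v x)) :=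
  tendsto_tsum_mul_of_tendsto_cofinite_zero (fun i => gradSq_nonneg S (u i)) hu
    (fun i => tsum_gradSq_le_sq (hM i)) (tendsto_gradSq hlim) hh

theorem memD12_and_D12Norm_le_of_tendsto (hN : 3 ≤ N) {ι : Type*} {l : Filter ι} [l.NeBot]
    {u : ι → G → ℝ} {v : G → ℝ} (hu : ∀ i, MemD12 S N (u i)) (hM : ∀ i, D12Norm S (u i) ≤ M)
    {B : ℝ} (hB : ∀ i, lpNorm (2 * (N : ℝ) / ((N : ℝ) - 2)) (u i) ≤ B)
    (hlim : ∀ x, Tendsto (fun i => u i x) l (𝓝 (v x))) :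
    MemD12 S N v ∧ D12Norm S v ≤ M := by
  have hr := two_mul_div_sub_two_pos hN
  obtain ⟨i⟩ := l.nonempty_of_neBot
  have hM_nonneg : 0 ≤ M := (D12Norm_nonneg S (u i)).trans (hM i)
  obtain ⟨hmem, -⟩ := summable_and_tsum_le_of_tendsto (fun i x => by positivity)
    (fun i => (hu i).1) (fun i => (lpNorm_rpow hr.ne' (u i)).symm.trans_le
      (Real.rpow_le_rpow (lpNorm_nonneg _ _) (hB i) hr.le))
    fun x => (hlim x).abs.rpow_const (.inr hr.le)
  obtain ⟨hgrad, hgrad_le⟩ := summable_and_tsum_le_of_tendsto (fun i => gradSq_nonneg S (u i))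
    (fun i => (hu i).2) (fun i => tsum_gradSq_le_sq (hM i)) (tendsto_gradSq hlim)
  refine ⟨⟨hmem, hgrad⟩, ?_⟩
  rwa [← sq_le_sq₀ (D12Norm_nonneg S v) hM_nonneg, D12Norm_sq]

theorem exists_strictMono_tendsto_of_D12Norm_le [Countable G] (hN : 3 ≤ N) {C : ℝ} (hC : 0 ≤ C)
    (hSobolev : ∀ w : G → ℝ, MemD12 S N w →
      lpNorm (2 * (N : ℝ) / ((N : ℝ) - 2)) w ≤ C * D12Norm S w)
    {u : ℕ → G → ℝ} (hu : ∀ n, MemD12 S N (u n)) (hM : ∀ n, D12Norm S (u n) ≤ M) :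
    ∃ φ : ℕ → ℕ, StrictMono φ ∧ ∃ v : G → ℝ, MemD12 S N v ∧ D12Norm S v ≤ M ∧
      ∀ x, Tendsto (fun n => u (φ n) x) atTop (𝓝 (v x)) := by
  have hB : ∀ n, lpNorm (2 * (N : ℝ) / ((N : ℝ) - 2)) (u n) ≤ C * M := fun n =>
    (hSobolev _ (hu n)).trans (mul_le_mul_of_nonneg_left (hM n) hC)
  obtain ⟨φ, hφ, v, hv⟩ := exists_strictMono_tendsto_of_abs_le fun n x =>
    ((hu n).1.abs_le_lpNorm (two_mul_div_sub_two_pos hN) x).trans (hB n)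
  obtain ⟨hmem, hle⟩ := memD12_and_D12Norm_le_of_tendsto hN (fun n => hu (φ n))
    (fun n => hM (φ n)) (fun n => hB (φ n)) hv
  exact ⟨φ, hφ, v, hmem, hle, hv⟩

end Compactness

lemma memlp_abs_rpow_and_lpNorm_le {X : Type*} {p q r : ℝ} (hp : 0 < p) (hr : 0 < r)
    (hrpq : r ≤ p * q) {w : X → ℝ} (hw : Memlp r w) :
    Memlp q (fun x => |w x| ^ p) ∧ lpNorm q (fun x => |w x| ^ p) ≤ lpNorm r w ^ p := by
  obtain ⟨hmem, hle⟩ := hw.mono_exponent hr hrpq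
  refine ⟨(memlp_abs_rpow_iff p).2 hmem, ?_⟩
  rw [lpNorm_abs_rpow hp.ne']
  exact Real.rpow_le_rpow (lpNorm_nonneg _ w) hle hp.le

section RieszEnergy

variable [Group G] {S : Finset G} {N : ℕ}

theorem tendsto_tsum_mul_conv_abs_rpow_zero (hS_gen : Subgroup.closure (S : Set G) = ⊤)
    (hS_sym : ∀ s ∈ S, s⁻¹ ∈ S) (hN : 3 ≤ N) {C : ℝ}
    (hgrowth : ∀ n : ℕ, 1 ≤ n →
      (Nat.card {x : G // wordDist S 1 x ≤ n} : ℝ) ≤ C * (n : ℝ) ^ N)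
    {α : ℝ} (hα : 0 < α) (hαN : α < N) {R : G → G → ℝ} (hR : ∀ x y, 0 ≤ R x y) {c : ℝ}
    (hR_up : ∀ x y : G, x ≠ y → R x y ≤ c * (wordDist S x y : ℝ) ^ (α - (N : ℝ)))
    (hR_diag : ∀ x, R x x ≤ c) {p : ℝ} (hp : ((N : ℝ) + α) / ((N : ℝ) - 2) ≤ p)
    {ι : Type*} {l : Filter ι} [l.NeBot] {w : ι → G → ℝ}
    (hw : ∀ i, Memlp (2 * (N : ℝ) / ((N : ℝ) - 2)) (w i)) {B : ℝ}
    (hB : ∀ i, lpNorm (2 * (N : ℝ) / ((N : ℝ) - 2)) (w i) ≤ B)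
    (hlim : ∀ x, Tendsto (fun i => w i x) l (𝓝 0)) {h : G → ℝ} (hh : Tendsto h cofinite (𝓝 0)) :
    Tendsto (fun i => ∑' x, h x * (conv R (fun y => |w i y| ^ p) x * |w i x| ^ p)) l (𝓝 0) := by
  have hN_sub : (0 : ℝ) < N - 2 := by
    have : (3 : ℝ) ≤ N := mod_cast hN
    linarith
  have hp_pos : 0 < p := (div_pos (by linarith) hN_sub).trans_le hp
  have hcritical : 2 * (N : ℝ) / (N - 2) ≤ p * (2 * N / (N + α)) :=
    calc 2 * (N : ℝ) / (N - 2) = (N + α) / (N - 2) * (2 * N / (N + α)) := by field_simp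
      _ ≤ p * (2 * N / (N + α)) := by gcongr
  have hf := fun i =>
    memlp_abs_rpow_and_lpNorm_le hp_pos (two_mul_div_sub_two_pos hN) hcritical (hw i)
  have hC : 0 ≤ C := by simpa using (Nat.cast_nonneg _).trans (hgrowth 1 le_rfl)
  have hc : 0 ≤ c := (hR 1 1).trans (hR_diag 1)
  refine tendsto_tsum_mul_conv_mul_zero (hasVolumeGrowth_truncDist hS_gen hS_sym hC hgrowth) hC
    (fun x y => by rw [truncDist, truncDist, wordDist_comm hS_sym]) hα hαN hR hc
    (le_mul_truncDist_rpow hc (by linarith) hR_up hR_diag) (fun i x => by positivity)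
    (fun i => (hf i).1) (fun i => (hf i).2.trans (Real.rpow_le_rpow (lpNorm_nonneg _ _) (hB i)
      hp_pos.le)) (fun x => ?_) hh
  simpa [hp_pos.ne'] using (hlim x).abs.rpow_const (.inr hp_pos.le)

end RieszEnergy

theorem concentration_compactness_convergence_general
    [Group G]
    (S : Finset G) (hS_gen : Subgroup.closure (S : Set G) = ⊤)
    (hS_sym : ∀ s ∈ S, s⁻¹ ∈ S)
    (N : ℕ) (hN : 3 ≤ N)
    (C₁ C₂ : ℝ) (hC₁ : 0 < C₁)
    (hgrowth : ∀ n : ℕ, 1 ≤ n →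
      C₁ * (n : ℝ) ^ N ≤ (Nat.card {x : G // wordDist S 1 x ≤ n} : ℝ) ∧
      (Nat.card {x : G // wordDist S 1 x ≤ n} : ℝ) ≤ C₂ * (n : ℝ) ^ N)
    (α : ℝ) (hα : 0 < α) (hαN : α < N)
    (Rα : G → G → ℝ) (hR_nonneg : ∀ x y, 0 ≤ Rα x y)
    (c₂ : ℝ)
    (hR_up : ∀ x y : G, x ≠ y → Rα x y ≤ c₂ * (wordDist S x y : ℝ) ^ (α - (N : ℝ)))
    (hR_diag : ∀ x : G, Rα x x ≤ c₂)
    (p : ℝ) (hp : ((N : ℝ) + α) / ((N : ℝ) - 2) ≤ p)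
    (u : ℕ → G → ℝ)
    (hbdd : ∃ M : ℝ, ∀ n, MemD12 S N (u n) ∧ D12Norm S (u n) ≤ M) :
    ∃ φ : ℕ → ℕ, StrictMono φ ∧ ∃ v : G → ℝ, MemD12 S N v ∧
      (∀ x : G, Tendsto (fun n => u (φ n) x) atTop (𝓝 (v x))) ∧
      (∀ h : G → ℝ, Tendsto h cofinite (𝓝 0) →
        Tendsto (fun n => ∑' x, h x * gradSq S (u (φ n)) x) atTop
          (𝓝 (∑' x, h x * gradSq S v x))) ∧
      (∀ h : G → ℝ, Tendsto h cofinite (𝓝 0) →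
        Tendsto (fun n => ∑' x, h x * gradSq S (fun z => u (φ n) z - v z) x) atTop (𝓝 0)) ∧
      (∀ h : G → ℝ, Tendsto h cofinite (𝓝 0) →
        Tendsto (fun n => ∑' x, h x *
            (conv Rα (fun y => |u (φ n) y - v y| ^ p) x * |u (φ n) x - v x| ^ p))
          atTop (𝓝 0)) := by
  have := countable_of_closure_eq_top hS_gen hS_sym
  obtain ⟨M, hM⟩ := hbdd
  obtain ⟨C, hC, hSobolev⟩ :=
    exists_lpNorm_le_mul_D12Norm hS_gen hS_sym hN hC₁ fun n hn => (hgrowth n hn).1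
  obtain ⟨φ, hφ, v, hv, hvM, hlim⟩ := exists_strictMono_tendsto_of_D12Norm_le hN hC hSobolev
    (fun n => (hM n).1) fun n => (hM n).2
  have hw : ∀ n, MemD12 S N fun x => u (φ n) x - v x := fun n => (hM (φ n)).1.sub hN hv
  have hwM : ∀ n, D12Norm S (fun x => u (φ n) x - v x) ≤ 2 * M := fun n =>
    D12Norm_sub_le_two_mul (hM (φ n)).1.2 hv.2 (hM (φ n)).2 hvM
  have hw_lim : ∀ x, Tendsto (fun n => u (φ n) x - v x) atTop (𝓝 0) := fun x =>
    tendsto_sub_nhds_zero_iff.2 (hlim x)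
  refine ⟨φ, hφ, v, hv, hlim, fun h hh => ?_, fun h hh => ?_, fun h hh => ?_⟩
  · exact tendsto_tsum_mul_gradSq (fun n => (hM (φ n)).1.2) (fun n => (hM (φ n)).2) hlim hh
  · simpa [gradSq] using tendsto_tsum_mul_gradSq (fun n => (hw n).2) hwM hw_lim hh
  · exact tendsto_tsum_mul_conv_abs_rpow_zero hS_gen hS_sym hN (fun n hn => (hgrowth n hn).2) hα
      hαN hR_nonneg hR_up hR_diag hp (fun n => (hw n).1)
      (fun n => (hSobolev _ (hw n)).trans (mul_le_mul_of_nonneg_left (hwM n) hC)) hw_lim hh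

theorem concentration_compactness_convergence
    [Group G] [Countable G]
    (S : Finset G) (hS_gen : Subgroup.closure (S : Set G) = ⊤)
    (hS_sym : ∀ s ∈ S, s⁻¹ ∈ S) (hS_e : (1 : G) ∉ S)
    (N : ℕ) (hN : 3 ≤ N)
    (C₁ C₂ : ℝ) (hC₁ : 0 < C₁) (hC₂ : 0 < C₂)
    (hgrowth : ∀ n : ℕ, 1 ≤ n →
      C₁ * (n : ℝ) ^ N ≤ (Nat.card {x : G // wordDist S 1 x ≤ n} : ℝ) ∧
      (Nat.card {x : G // wordDist S 1 x ≤ n} : ℝ) ≤ C₂ * (n : ℝ) ^ N)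
    (α : ℝ) (hα : 0 < α) (hαN : α < N)
    (Rα : G → G → ℝ) (hR_nonneg : ∀ x y, 0 ≤ Rα x y)
    (hR_symm : ∀ x y, Rα x y = Rα y x)
    (c₁ c₂ : ℝ) (hc₁ : 0 < c₁) (hc₂ : 0 < c₂)
    (hR_low : ∀ x y : G, x ≠ y → c₁ * (wordDist S x y : ℝ) ^ (α - (N : ℝ)) ≤ Rα x y)
    (hR_up : ∀ x y : G, x ≠ y → Rα x y ≤ c₂ * (wordDist S x y : ℝ) ^ (α - (N : ℝ)))
    (hR_diag : ∀ x : G, Rα x x ≤ c₂)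
    (p : ℝ) (hp : ((N : ℝ) + α) / ((N : ℝ) - 2) ≤ p)
    (u : ℕ → G → ℝ)
    (hbdd : ∃ M : ℝ, ∀ n, MemD12 S N (u n) ∧ D12Norm S (u n) ≤ M) :
    ∃ φ : ℕ → ℕ, StrictMono φ ∧ ∃ v : G → ℝ, MemD12 S N v ∧
      (∀ x : G, Tendsto (fun n => u (φ n) x) atTop (𝓝 (v x))) ∧
      (∀ h : G → ℝ, Tendsto h cofinite (𝓝 0) →
        Tendsto (fun n => ∑' x, h x * gradSq S (u (φ n)) x) atTop
          (𝓝 (∑' x, h x * gradSq S v x))) ∧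
      (∀ h : G → ℝ, Tendsto h cofinite (𝓝 0) →
        Tendsto (fun n => ∑' x, h x * gradSq S (fun z => u (φ n) z - v z) x) atTop (𝓝 0)) ∧
      (∀ h : G → ℝ, Tendsto h cofinite (𝓝 0) →
        Tendsto (fun n => ∑' x, h x *
            (conv Rα (fun y => |u (φ n) y - v y| ^ p) x * |u (φ n) x - v x| ^ p))
          atTop (𝓝 0)) := by
  exact concentration_compactness_convergence_general S hS_gen hS_sym N hN C₁ C₂ hC₁ hgrowth α hα
    hαN Rα hR_nonneg c₂ hR_up hR_diag p hp u hbdd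

end Choquard
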